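/- arXiv:1601.07136 — 2 statements merged into one kernel-verified Lean document; each statement's English description precedes it below -/
import Mathlib

section
/- Let T = ℂ[[x₁, …, x_n]] be the formal power series ring in n ≥ 2 variables over the complex numbers. Then for any integers d and t with 1 ≤ d ≤ n − 1, 0 ≤ t ≤ n − 1, and d − 1 ≤ t, there exists a local unique factorization domain A such that the completion of A is T, α(A,(0)) = t, and α(A,pA) = d − 1 for every height one prime ideal pA of A. -/
universe u

open IsLocalRing Cardinal

/-- The height of an ideal: infimum of heights of primes containing it. -/
noncomputable def idealHt {T : Type*} [CommRing T] (I : Ideal T) : ℕ∞ :=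
  ⨅ (p : PrimeSpectrum T) (_ : I ≤ p.asIdeal), Order.height p

/-- `T` is equidimensional: `dim (T/p) = dim T` for every minimal prime `p`. -/
def IsEquidim (T : Type*) [CommRing T] : Prop :=
  ∀ p ∈ minimalPrimes T, ringKrullDim (T ⧸ p) = ringKrullDim T

/-- `depth T > 1`: there is a regular sequence of length two inside the maximal ideal. -/
def DepthGTOne (T : Type*) [CommRing T] [IsLocalRing T] : Prop :=
  ∃ x y : T, x ∈ maximalIdeal T ∧ y ∈ maximalIdeal T ∧ x ∈ nonZeroDivisors T ∧
    Ideal.Quotient.mk (Ideal.span {x}) y ∈ nonZeroDivisors (T ⧸ Ideal.span {x})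

/-- A local (Noetherian) unique factorization domain `A` together with an identification
of its `maximalIdeal A`-adic completion with `T`. -/
structure LocalUFDWithCompletion (T : Type u) [CommRing T] : Type (u + 1) where
  /-- the underlying ring -/
  A : Type u
  [commRing : CommRing A]
  [isDomain : IsDomain A]
  [isNoetherian : IsNoetherianRing A]
  [isLocalRing : IsLocalRing A]
  [ufd : UniqueFactorizationMonoid A]
  /-- the natural map from `A` to its completion `T` -/
  toCompletion : A →+* T
  /-- the completion of `A` is `T` -/
  completionEquiv : AdicCompletion (IsLocalRing.maximalIdeal A) A ≃+* T
  completionEquiv_comp : ∀ a : A,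
    completionEquiv (algebraMap A (AdicCompletion (IsLocalRing.maximalIdeal A) A) a) =
      toCompletion a

attribute [instance] LocalUFDWithCompletion.commRing LocalUFDWithCompletion.isDomain
  LocalUFDWithCompletion.isNoetherian LocalUFDWithCompletion.isLocalRing
  LocalUFDWithCompletion.ufd

/-- `α(A, p)`: the Krull dimension of the formal fiber ring `T ⊗_A κ(p)` of `A` at the
prime ideal `p`, where `κ(p) = A_p / p A_p` and `T` is the completion of `A`. -/
noncomputable def alphaAt {T : Type u} [CommRing T] (X : LocalUFDWithCompletion T)
    (p : Ideal X.A) (hp : p.IsPrime) : WithBot ℕ∞ :=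
  letI := X.toCompletion.toAlgebra
  haveI := hp
  ringKrullDim (TensorProduct X.A T
    (Localization.AtPrime p ⧸ IsLocalRing.maximalIdeal (Localization.AtPrime p)))

/-!
Let `P = (x₁, …, x_{d-1}) ⊆ Q = (x₁, …, x_t)`, and call a prime `q ⊋ P` of height `ht P + 1`
special. The ring `A` is a union of a transfinite chain of subrings `R` of `T` such that
`R ∩ Q = 0` and such that, for each special prime `q`, any two elements of `R` are comparable for
divisibility after inverting the elements of `R` outside `q`. This is preserved when one adjoins to
`R` an element that is transcendental over `R` modulo `Q` and modulo every special prime meeting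
`R` nontrivially. As long as `R` has fewer elements than the coefficient field, such elements exist
in every coset of an ideal that is contained in none of these primes. A linear equation over `R`
that is solvable in `T` becomes solvable in a slightly larger subring: its solutions in `T` leave
room for a transcendental parameter, and comparability provides denominators outside `q`.

If all linear equations over `A` that are solvable in `T` are solvable in `A`, then finitely
generated ideals of `A` are contracted from `T`. Since `A` is also dense in `T`, it is Noetherian
with completion `T`, and `T` is flat over `A`, so that unique factorization descends to `A`. The
subring `A` can be built to contain a nonzero element of every prime of height greater than `ht Q`,
so the fiber over `(0)` has dimension `ht Q = t`. A height one prime `p = bA` lies in a special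
prime `q`, and comparability at `q` forces `q ∩ A = p`. It can also be arranged that every prime of
height greater than `ht q` contains an element of `A` outside the special primes through `b`, so
the fiber over `p` has dimension `ht q - 1 = d - 1`.
-/

universe v

open Polynomial

namespace FormalFiber

section Subrings

variable {T : Type u} [CommRing T] {R R' : Subring T} {P q : Ideal T} {s : T}

/-- `R` is valuative at `q`: of any two elements of `R`, one divides the other locally at `q`. When
`R` is a domain and `q` is prime, this says that the localization of `R` at `q ∩ R` is a valuation
ring. -/
def IsValuativeAt (R : Subring T) (q : Ideal T) : Prop :=
  ∀ a ∈ R, ∀ b ∈ R, ∃ r ∈ R, ∃ s ∈ R, r * a = s * b ∧ (r ∉ q ∨ s ∉ q)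

/-- The residue class of `s` in `T ⧸ P` is transcendental over the image of `R`. -/
def TranscendentalMod (R : Subring T) (P : Ideal T) (s : T) : Prop :=
  ∀ f : R[X], aeval s f ∈ P → ∀ i, (f.coeff i : T) ∈ P

/-- `P` contracts to the zero ideal of `R`; for `R = A` with completion `T`, this says that `P`
belongs to the generic formal fiber of `A`. -/
def ContractsToZero (R : Subring T) (P : Ideal T) : Prop :=
  ∀ x ∈ R, x ∈ P → x = 0

/-- Every element of `R'` lies in `R` after multiplication by an element of `R` outside `q`; thus
`R'` is contained in the localization of `R` at `q ∩ R`. -/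
def HasDenominatorsOutside (R R' : Subring T) (q : Ideal T) : Prop :=
  ∀ x ∈ R', ∃ ρ ∈ R, ρ ∉ q ∧ ρ * x ∈ R

/-- The subring `R[s]` of `T`. Unlike `Algebra.adjoin R {s}`, it is again a `Subring T`, so that
the construction can be iterated. -/
def adjoin (R : Subring T) (s : T) : Subring T :=
  (Algebra.adjoin R {s}).toSubring

lemma mem_adjoin_iff {x : T} : x ∈ adjoin R s ↔ ∃ f : R[X], aeval s f = x := by
  rw [adjoin, Subalgebra.mem_toSubring, Algebra.adjoin_singleton_eq_range_aeval, AlgHom.mem_range]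

lemma aeval_mem_adjoin (s : T) (f : R[X]) : aeval s f ∈ adjoin R s :=
  mem_adjoin_iff.2 ⟨f, rfl⟩

lemma le_adjoin (R : Subring T) (s : T) : R ≤ adjoin R s :=
  fun r hr ↦ mem_adjoin_iff.2 ⟨C ⟨r, hr⟩, aeval_C s _⟩

lemma self_mem_adjoin (R : Subring T) (s : T) : s ∈ adjoin R s :=
  mem_adjoin_iff.2 ⟨X, aeval_X s⟩

lemma adjoin_le (h : R ≤ R') (hs : s ∈ R') : adjoin R s ≤ R' := by
  intro x hx
  obtain ⟨f, rfl⟩ := mem_adjoin_iff.1 hx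
  rw [aeval_eq_sum_range]
  exact sum_mem fun i _ ↦ mul_mem (h (f.coeff i).2) (pow_mem hs i)

lemma adjoin_comm (R : Subring T) (s t : T) :
    adjoin (adjoin R s) t = adjoin (adjoin R t) s := by
  have key (s t : T) : adjoin (adjoin R s) t ≤ adjoin (adjoin R t) s :=
    adjoin_le (adjoin_le ((le_adjoin R t).trans (le_adjoin _ s)) (self_mem_adjoin _ s))
      (le_adjoin _ s (self_mem_adjoin R t))
  exact le_antisymm (key s t) (key t s)

lemma TranscendentalMod.notMem [P.IsPrime] (hs : TranscendentalMod R P s) : s ∉ P := by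
  intro hsP
  have h1 := hs X (by rwa [aeval_X]) 1
  rw [coeff_X_one] at h1
  exact P.one_notMem h1

lemma ContractsToZero.adjoin_of_transcendentalMod (h : ContractsToZero R P)
    (hs : TranscendentalMod R P s) : ContractsToZero (adjoin R s) P := by
  intro x hx hxP
  obtain ⟨f, rfl⟩ := mem_adjoin_iff.1 hx
  have hf : f = 0 := Polynomial.ext fun i ↦ Subtype.ext (h _ (f.coeff i).2 (hs f hxP i))
  rw [hf, map_zero]

lemma ContractsToZero.of_hasDenominatorsOutside [IsDomain T] (h : ContractsToZero R P)
    (hd : HasDenominatorsOutside R R' P) : ContractsToZero R' P := by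
  intro x hx hxP
  obtain ⟨ρ, -, hρP, hρx⟩ := hd x hx
  refine (mul_eq_zero.1 (h _ hρx (P.mul_mem_left ρ hxP))).resolve_left ?_
  rintro rfl
  exact hρP P.zero_mem

lemma HasDenominatorsOutside.adjoin [q.IsPrime] {ρ : T} (hρ : ρ ∈ R) (hρq : ρ ∉ q)
    (hs : ρ * s ∈ R) : HasDenominatorsOutside R (adjoin R s) q := by
  intro x hx
  obtain ⟨f, rfl⟩ := mem_adjoin_iff.1 hx
  refine ⟨ρ ^ f.natDegree, pow_mem hρ _, fun h ↦ hρq (Ideal.IsPrime.mem_of_pow_mem ‹_› _ h), ?_⟩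
  rw [aeval_eq_sum_range, Finset.mul_sum]
  refine sum_mem fun i hi ↦ ?_
  have hpow : ρ ^ f.natDegree = ρ ^ (f.natDegree - i) * ρ ^ i := by
    rw [← pow_add, Nat.sub_add_cancel (Finset.mem_range_succ_iff.1 hi)]
  have hterm : ρ ^ f.natDegree * (f.coeff i • s ^ i) =
      f.coeff i * (ρ ^ (f.natDegree - i) * (ρ * s) ^ i) := by
    rw [hpow, Subring.smul_def, smul_eq_mul]
    ring
  rw [hterm]
  exact mul_mem (f.coeff i).2 (mul_mem (pow_mem hρ _) (pow_mem hs i))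

lemma IsValuativeAt.of_hasDenominatorsOutside [q.IsPrime] (hR : IsValuativeAt R q)
    (hle : R ≤ R') (hd : HasDenominatorsOutside R R' q) : IsValuativeAt R' q := by
  intro a ha b hb
  obtain ⟨ρ, hρ, hρq, hρa⟩ := hd a ha
  obtain ⟨σ, hσ, hσq, hσb⟩ := hd b hb
  obtain ⟨r, hr, s, hs, hrs, hq⟩ := hR _ hρa _ hσb
  refine ⟨r * ρ, hle (mul_mem hr hρ), s * σ, hle (mul_mem hs hσ), by linear_combination hrs, ?_⟩
  exact hq.imp (Ideal.IsPrime.mul_notMem ‹_› · hρq) (Ideal.IsPrime.mul_notMem ‹_› · hσq)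

lemma IsValuativeAt.exists_common_divisor [hq : q.IsPrime] (hR : IsValuativeAt R q) {ι : Type*}
    {I : Finset ι} (hI : I.Nonempty) (a : ι → R) :
    ∃ (ρ d : R) (b : ι → R), (ρ : T) ∉ q ∧ (∀ i ∈ I, ρ * a i = d * b i) ∧
      ∃ i ∈ I, (b i : T) ∉ q := by
  classical
  induction hI using Finset.Nonempty.cons_induction with
  | singleton j => exact ⟨1, a j, fun _ ↦ 1, q.one_notMem, by simp, j, by simp, q.one_notMem⟩
  | cons j I hj _ ih =>
    obtain ⟨ρ, d, b, hρ, hb, i, hi, hbi⟩ := ih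
    obtain ⟨r, hr, s, hs, hrs, hrsq⟩ := hR (a j) (a j).2 d d.2
    lift r to R using hr
    lift s to R using hs
    replace hrs : r * a j = s * d := Subtype.ext hrs
    have hne {l : ι} (hl : l ∈ I) : l ≠ j := by
      rintro rfl
      exact hj hl
    have hb' : ∀ l ∈ I.cons j hj, ρ * r * a l = d * Function.update (r • b) j (s * ρ) l := by
      simp only [Finset.mem_cons, forall_eq_or_imp, Function.update_self]
      refine ⟨by linear_combination ρ * hrs, fun l hl ↦ ?_⟩
      rw [Function.update_of_ne (hne hl), Pi.smul_apply, smul_eq_mul]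
      linear_combination r * hb l hl
    by_cases hrq : (r : T) ∈ q
    · have hsρ : (s * ρ : T) ∉ q := hq.mul_notMem (hrsq.resolve_left (not_not.2 hrq)) hρ
      refine ⟨s * ρ, a j, Function.update (r • b) j (s * ρ), hsρ, ?_, j, by simp, by simpa⟩
      simp only [Finset.mem_cons, forall_eq_or_imp, Function.update_self]
      refine ⟨by ring, fun l hl ↦ ?_⟩
      rw [Function.update_of_ne (hne hl), Pi.smul_apply, smul_eq_mul]
      linear_combination s * hb l hl - b l * hrs
    · refine ⟨ρ * r, d, _, hq.mul_notMem hρ hrq, hb', i, by simp [hi], ?_⟩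
      rw [Function.update_of_ne (hne hi)]
      exact hq.mul_notMem hrq hbi

lemma IsValuativeAt.exists_content [q.IsPrime] (hR : IsValuativeAt R q) (f : R[X]) :
    ∃ (ρ d : R) (g : R[X]), (ρ : T) ∉ q ∧ C ρ * f = C d * g ∧ ∃ i, (g.coeff i : T) ∉ q := by
  obtain ⟨ρ, d, b, hρ, hb, i, hi, hbi⟩ :=
    hR.exists_common_divisor Finset.nonempty_range_add_one f.coeff (I := .range (f.natDegree + 1))
  refine ⟨ρ, d, ∑ j ∈ Finset.range (f.natDegree + 1), C (b j) * X ^ j, hρ, ?_, i, ?_⟩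
  · conv_lhs => rw [f.as_sum_range_C_mul_X_pow]
    rw [Finset.mul_sum, Finset.mul_sum]
    refine Finset.sum_congr rfl fun j hj ↦ ?_
    rw [← mul_assoc, ← mul_assoc, ← C_mul, ← C_mul, hb j hj]
  · simpa [finsetSum_coeff, coeff_C_mul, coeff_X_pow, Finset.mem_range.1 hi] using hbi

/-- Gauss's lemma: the content of a polynomial can be split off locally at `q`. -/
lemma IsValuativeAt.adjoin_of_transcendentalMod [hq : q.IsPrime] (hR : IsValuativeAt R q)
    (hs : TranscendentalMod R q s) : IsValuativeAt (adjoin R s) q := by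
  have primitive (a : T) (ha : a ∈ adjoin R s) :
      ∃ ρ ∈ R, ∃ d ∈ R, ∃ g ∈ adjoin R s, ρ ∉ q ∧ g ∉ q ∧ ρ * a = d * g := by
    obtain ⟨f, rfl⟩ := mem_adjoin_iff.1 ha
    obtain ⟨ρ, d, g, hρ, hfg, i, hi⟩ := hR.exists_content f
    refine ⟨ρ, ρ.2, d, d.2, aeval s g, aeval_mem_adjoin s g, hρ, fun h ↦ hi (hs g h i), ?_⟩
    have hfg' := congr(aeval s $hfg)
    rwa [map_mul, map_mul, aeval_C, aeval_C] at hfg'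
  intro a ha b hb
  obtain ⟨ρ, hρ, d, hd, f, hf, hρq, hfq, hρa⟩ := primitive a ha
  obtain ⟨σ, hσ, e, he, g, hg, hσq, hgq, hσb⟩ := primitive b hb
  obtain ⟨r, hr, s', hs', hrs, hrsq⟩ := hR d hd e he
  have hle := le_adjoin R s
  refine ⟨r * ρ * g, mul_mem (hle (mul_mem hr hρ)) hg,
    s' * σ * f, mul_mem (hle (mul_mem hs' hσ)) hf,
    by linear_combination r * g * hρa - s' * f * hσb + f * g * hrs, ?_⟩
  exact hrsq.imp (fun h ↦ hq.mul_notMem (hq.mul_notMem h hρq) hgq)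
    (fun h ↦ hq.mul_notMem (hq.mul_notMem h hσq) hfq)

end Subrings

lemma exists_bezout_relation {R : Type*} [CommRing R] [IsDomain R] (f g : R[X]) :
    ∃ (f' g' u v : R[X]) (c : R), c ≠ 0 ∧ g' * f = f' * g ∧ u * f' + v * g' = C c := by
  classical
  let K := FractionRing R
  have inj : Function.Injective (mapRingHom (algebraMap R K)) :=
    map_injective _ (IsFractionRing.injective R K)
  obtain ⟨f₁, g₁, hfg, u₁, v₁, huv⟩ : ∃ f₁ g₁ : K[X],
      g₁ * f.map (algebraMap R K) = f₁ * g.map (algebraMap R K) ∧ IsCoprime f₁ g₁ := by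
    set F := f.map (algebraMap R K)
    set G := g.map (algebraMap R K)
    by_cases hG : G = 0
    · exact ⟨1, 0, by simp [hG], isCoprime_one_left⟩
    · refine ⟨F / gcd F G, G / gcd F G, ?_, isCoprime_div_gcd_div_gcd hG⟩
      have h0 : gcd F G ≠ 0 := fun h ↦ hG ((gcd_eq_zero_iff _ _).1 h).2
      refine mul_left_cancel₀ h0 ?_
      rw [← mul_assoc, ← mul_assoc, EuclideanDomain.mul_div_cancel' h0 (gcd_dvd_right F G),
        EuclideanDomain.mul_div_cancel' h0 (gcd_dvd_left F G), mul_comm]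
  let := Polynomial.algebra R K
  have := Polynomial.isLocalization (nonZeroDivisors R) K
  obtain ⟨⟨_, c, hc, rfl⟩, h⟩ := IsLocalization.exist_integer_multiples_of_finite
    ((nonZeroDivisors R).map (C : R →+* R[X])) ![f₁, g₁, u₁, v₁]
  obtain ⟨f', hf'⟩ := h 0
  obtain ⟨g', hg'⟩ := h 1
  obtain ⟨u, hu⟩ := h 2
  obtain ⟨v, hv⟩ := h 3
  replace hf' : f'.map (algebraMap R K) = C (algebraMap R K c) * f₁ := by
    simpa [Algebra.smul_def] using hf'
  replace hg' : g'.map (algebraMap R K) = C (algebraMap R K c) * g₁ := by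
    simpa [Algebra.smul_def] using hg'
  replace hu : u.map (algebraMap R K) = C (algebraMap R K c) * u₁ := by
    simpa [Algebra.smul_def] using hu
  replace hv : v.map (algebraMap R K) = C (algebraMap R K c) * v₁ := by
    simpa [Algebra.smul_def] using hv
  refine ⟨f', g', u, v, c * c, mul_self_ne_zero.2 (nonZeroDivisors.ne_zero hc), inj ?_, inj ?_⟩
  · simp only [coe_mapRingHom, Polynomial.map_mul, hf', hg']
    linear_combination C (algebraMap R K c) * hfg
  · simp only [coe_mapRingHom, Polynomial.map_mul, Polynomial.map_add, map_C, map_mul, hf', hg',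
      hu, hv]
    linear_combination C (algebraMap R K c) ^ 2 * huv

/-- After inverting the nonzero elements of `R`, which avoid `q`, the ring `R[s]` becomes a quotient
of a principal ideal domain. -/
lemma ContractsToZero.isValuativeAt_adjoin {T : Type u} [CommRing T] [IsDomain T] {R : Subring T}
    {q : Ideal T} (hR : ContractsToZero R q) (s : T) : IsValuativeAt (adjoin R s) q := by
  intro a ha b hb
  obtain ⟨f, rfl⟩ := mem_adjoin_iff.1 ha
  obtain ⟨g, rfl⟩ := mem_adjoin_iff.1 hb
  obtain ⟨f', g', u, v, c, hc, hfg, huv⟩ := exists_bezout_relation f g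
  refine ⟨_, aeval_mem_adjoin s g', _, aeval_mem_adjoin s f', by rw [← map_mul, hfg, map_mul], ?_⟩
  by_contra! hmem
  have hcq : (c : T) ∈ q := by
    have huv' := congr(aeval s $huv)
    rw [map_add, map_mul, map_mul, aeval_C] at huv'
    change _ = (c : T) at huv'
    rw [← huv']
    exact q.add_mem (q.mul_mem_left _ hmem.2) (q.mul_mem_left _ hmem.1)
  exact hc (Subtype.ext (hR c c.2 hcq))

section Avoidance

variable {k T : Type u} [Field k] [CommRing T] [Algebra k T]

lemma exists_forall_notMem_of_countable {k ι : Type u} (hk : ℵ₀ < #k) (hι : #ι < #k)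
    {bad : ι → Set k} (hbad : ∀ i, (bad i).Countable) : ∃ z, ∀ i, z ∉ bad i := by
  by_contra! h
  have hcover : (⋃ i, bad i) = Set.univ := Set.eq_univ_of_forall fun z ↦ by simpa using h z
  have hle : #k ≤ #ι * ℵ₀ := by
    calc #k = #(⋃ i, bad i) := by rw [hcover, mk_univ]
      _ ≤ Cardinal.sum fun i ↦ #(bad i) := mk_iUnion_le_sum_mk
      _ ≤ Cardinal.sum fun _ : ι ↦ ℵ₀ := sum_le_sum _ _ fun i ↦ (hbad i).le_aleph0
      _ = #ι * ℵ₀ := by simp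
  exact (mul_lt_of_lt hk.le hι hk).not_ge hle

lemma exists_coeff_notMem_iff {P : Ideal T} {f : T[X]} :
    (∃ i, f.coeff i ∉ P) ↔ f.map (Ideal.Quotient.mk P) ≠ 0 := by
  simp [Polynomial.ext_iff, Ideal.Quotient.eq_zero_iff_mem]

lemma finite_setOf_eval_mem {P : Ideal T} [P.IsPrime] {f : T[X]} (hf : ∃ i, f.coeff i ∉ P) :
    {z : k | eval (algebraMap k T z) f ∈ P}.Finite := by
  have hroots := finite_setOfPred_isRoot (exists_coeff_notMem_iff.1 hf)
  refine (hroots.preimage (algebraMap k (T ⧸ P)).injective.injOn).subset fun z hz ↦ ?_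
  rw [Set.mem_ofPred_eq, ← Ideal.Quotient.eq_zero_iff_mem, ← eval₂_at_apply, ← eval_map] at hz
  exact hz

lemma exists_coeff_comp_notMem {P : Ideal T} [P.IsPrime] {f : T[X]} (hf : ∃ i, f.coeff i ∉ P)
    (t : T) {w : T} (hw : w ∉ P) : ∃ i, (f.comp (C t + C w * X)).coeff i ∉ P := by
  rw [exists_coeff_notMem_iff] at hf ⊢
  rw [Polynomial.map_comp, ne_eq, comp_eq_zero_iff, not_or]
  refine ⟨hf, fun h ↦ hw ?_⟩
  simpa [coeff_C, Ideal.Quotient.eq_zero_iff_mem] using congr(coeff $(h.2) 1)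

lemma exists_transcendentalMod (hk : ℵ₀ < #k) {R : Subring T} (hR : #R < #k) {ι : Type u}
    (hι : #ι < #k) (P : ι → Ideal T) (hP : ∀ i, (P i).IsPrime) (t w : ι → T)
    (hw : ∀ i, w i ∉ P i) : ∃ z : k, ∀ i, TranscendentalMod R (P i) (t i + z • w i) := by
  let J := {x : ι × R[X] // ∃ i, (x.2.coeff i : T) ∉ P x.1}
  have hJ : #J < #k := by
    refine (mk_subtype_le _).trans_lt ?_
    rw [mk_prod, lift_id, lift_id]
    exact mul_lt_of_lt hk.le hι (cardinalMk_le_max.trans_lt (max_lt hR hk))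
  obtain ⟨z, hz⟩ := exists_forall_notMem_of_countable hk hJ
    (bad := fun x ↦ {z : k | aeval (t x.1.1 + z • w x.1.1) x.1.2 ∈ P x.1.1}) <| by
      rintro ⟨⟨i, f⟩, j, hj⟩
      have hfin := finite_setOf_eval_mem (k := k) <| exists_coeff_comp_notMem
        (f := f.map (algebraMap R T)) ⟨j, by rwa [coeff_map]⟩ (t i) (hw i)
      refine hfin.countable.mono fun z hz ↦ ?_
      rwa [Set.mem_ofPred_eq, eval_comp, eval_map_algebraMap, eval_add, eval_mul, eval_C, eval_C,
        eval_X, mul_comm, ← Algebra.smul_def]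
  refine ⟨z, fun i f hf ↦ ?_⟩
  by_contra! hcoeff
  exact hz ⟨(i, f), hcoeff⟩ hf

lemma exists_mem_forall_notMem (hk : ℵ₀ < #k) {J : Ideal T} (hJ : J.FG) {S : Set (Ideal T)}
    (hS : #S < #k) (hprime : ∀ q ∈ S, q.IsPrime) (hnle : ∀ q ∈ S, ¬ J ≤ q) :
    ∃ w ∈ J, ∀ q ∈ S, w ∉ q := by
  obtain ⟨n, g, rfl⟩ := Submodule.fg_iff_exists_fin_generating_family.1 hJ
  let f : T[X] := ∑ i : Fin n, C (g i) * X ^ (i : ℕ)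
  have hf (i : Fin n) : f.coeff i = g i := by
    simp [f, finsetSum_coeff, coeff_X_pow, Fin.val_inj]
  have hcoeff (q : S) : ∃ i, f.coeff i ∉ q.1 := by
    by_contra! h
    refine hnle q q.2 (Submodule.span_le.2 ?_)
    rintro _ ⟨i, rfl⟩
    exact hf i ▸ h i
  obtain ⟨z, hz⟩ := exists_forall_notMem_of_countable hk hS
    (bad := fun q ↦ {z : k | eval (algebraMap k T z) f ∈ q.1}) fun q ↦
      have := hprime q q.2
      (finite_setOf_eval_mem (hcoeff q)).countable
  refine ⟨eval (algebraMap k T z) f, ?_, fun q hq ↦ hz ⟨q, hq⟩⟩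
  simp only [f, eval_finsetSum, eval_mul, eval_C, eval_pow, eval_X]
  exact sum_mem fun i _ ↦ Ideal.mul_mem_right _ _ (Submodule.subset_span ⟨i, rfl⟩)

end Avoidance

/-- The prescribed shape of the formal fibers of the ring under construction: `generic` is to be the
largest prime of its generic formal fiber, and each of the primes in `special` is either to be the
largest prime in the formal fiber of a height one prime or to belong to the generic formal fiber. -/
structure FiberData (T : Type u) [CommRing T] where
  generic : Ideal T
  special : Set (Ideal T)
  generic_isPrime : generic.IsPrime
  isPrime_of_mem : ∀ q ∈ special, q.IsPrime
  countable_setOf_mem : ∀ r ∉ generic, {q ∈ special | r ∈ q}.Countable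

namespace FiberData

section Definitions

variable {T : Type u} [CommRing T] (D : FiberData T) (R : Subring T)

/-- The invariant of the construction. Valuativity at the special primes is what makes it possible
to solve linear equations over `R` in larger admissible subrings. -/
structure Admissible : Prop where
  contractsToZero : ContractsToZero R D.generic
  isValuativeAt : ∀ q ∈ D.special, IsValuativeAt R q

/-- The primes modulo which an element adjoined to `R` should be transcendental: the generic prime,
and the special primes that do not contract to the zero ideal of `R`. -/
def controlled : Set (Ideal T) :=
  insert D.generic {q ∈ D.special | ∃ x ∈ R, x ≠ 0 ∧ x ∈ q}

end Definitions

variable {T : Type u} [CommRing T] {D : FiberData T} {R : Subring T}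

lemma isPrime_of_mem_controlled {q : Ideal T} (hq : q ∈ D.controlled R) : q.IsPrime := by
  rcases hq with rfl | hq
  exacts [D.generic_isPrime, D.isPrime_of_mem q hq.1]

namespace Admissible

lemma notMem_generic (hR : D.Admissible R) {x : T} (hx : x ∈ R) (hx0 : x ≠ 0) : x ∉ D.generic :=
  fun h ↦ hx0 (hR.contractsToZero x hx h)

lemma mk_controlled_lt (hR : D.Admissible R) {κ : Cardinal} (hκ : ℵ₀ < κ) (hcard : #R < κ) :
    #(D.controlled R) < κ := by
  let N := {x : R // (x : T) ≠ 0}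
  have hsub : {q ∈ D.special | ∃ x ∈ R, x ≠ 0 ∧ x ∈ q} ⊆
      ⋃ x : N, {q ∈ D.special | (x.1 : T) ∈ q} := by
    rintro q ⟨hq, x, hx, hx0, hxq⟩
    exact Set.mem_iUnion.2 ⟨⟨⟨x, hx⟩, hx0⟩, hq, hxq⟩
  refine mk_insert_le.trans_lt (add_lt_of_lt hκ.le ?_ (one_lt_aleph0.trans hκ))
  calc _ ≤ #(⋃ x : N, {q ∈ D.special | (x.1 : T) ∈ q}) := mk_le_mk_of_subset hsub
    _ ≤ Cardinal.sum fun x : N ↦ #{q ∈ D.special | (x.1 : T) ∈ q} := mk_iUnion_le_sum_mk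
    _ ≤ Cardinal.sum fun _ : N ↦ ℵ₀ := sum_le_sum _ _ fun x ↦
        (D.countable_setOf_mem _ (hR.notMem_generic x.1.2 x.2)).le_aleph0
    _ = #N * ℵ₀ := by simp
    _ < κ := mul_lt_of_lt hκ.le ((mk_subtype_le _).trans_lt hcard) hκ

lemma isValuativeAt_adjoin [IsDomain T] (hR : D.Admissible R) {s : T} {q : Ideal T}
    (hq : q ∈ D.special) (hs : q ∈ D.controlled R → TranscendentalMod R q s) :
    IsValuativeAt (adjoin R s) q := by
  have := D.isPrime_of_mem q hq
  by_cases hrel : ∃ x ∈ R, x ≠ 0 ∧ x ∈ q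
  · exact (hR.isValuativeAt q hq).adjoin_of_transcendentalMod (hs (.inr ⟨hq, hrel⟩))
  · refine ContractsToZero.isValuativeAt_adjoin (fun x hx hxq ↦ ?_) s
    by_contra hx0
    exact hrel ⟨x, hx, hx0, hxq⟩

protected lemma adjoin [IsDomain T] (hR : D.Admissible R) {s : T}
    (hs : ∀ q ∈ D.controlled R, TranscendentalMod R q s) : D.Admissible (adjoin R s) where
  contractsToZero := hR.contractsToZero.adjoin_of_transcendentalMod (hs _ (.inl rfl))
  isValuativeAt q hq := hR.isValuativeAt_adjoin hq (hs q)

lemma exists_transcendentalMod_add_smul {k : Type u} [Field k] [Algebra k T] (hk : ℵ₀ < #k)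
    (hR : D.Admissible R) (hcard : #R < #k) (S : Finset (T × T)) :
    ∃ z : k, ∀ q ∈ D.controlled R, ∀ p ∈ S, p.2 ∉ q → TranscendentalMod R q (p.1 + z • p.2) := by
  let ι := {i : D.controlled R × S // i.2.1.2 ∉ i.1.1}
  have hι : #ι < #k := by
    refine (mk_subtype_le _).trans_lt ?_
    rw [mk_prod, lift_id, lift_id]
    exact mul_lt_of_lt hk.le (hR.mk_controlled_lt hk hcard) ((lt_aleph0_of_finite S).trans hk)
  obtain ⟨z, hz⟩ := exists_transcendentalMod hk hcard hι (fun i ↦ i.1.1.1)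
    (fun i ↦ isPrime_of_mem_controlled i.1.1.2) (fun i ↦ i.1.2.1.1) (fun i ↦ i.1.2.1.2) fun i ↦ i.2
  exact ⟨z, fun q hq p hp hpq ↦ hz ⟨(⟨q, hq⟩, ⟨p, hp⟩), hpq⟩⟩

lemma exists_transcendentalMod_sub_mem {k : Type u} [Field k] [Algebra k T] (hk : ℵ₀ < #k)
    (hR : D.Admissible R) (hcard : #R < #k) {J : Ideal T} (hJ : J.FG)
    (hnle : ∀ q ∈ D.controlled R, ¬ J ≤ q) (u : T) :
    ∃ s, s - u ∈ J ∧ ∀ q ∈ D.controlled R, TranscendentalMod R q s := by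
  obtain ⟨w, hwJ, hw⟩ := exists_mem_forall_notMem hk hJ (hR.mk_controlled_lt hk hcard)
    (fun q ↦ isPrime_of_mem_controlled) hnle
  obtain ⟨z, hz⟩ := hR.exists_transcendentalMod_add_smul hk hcard {(u, w)}
  refine ⟨u + z • w, ?_, fun q hq ↦ hz q hq _ (Finset.mem_singleton_self _) (hw q hq)⟩
  rw [add_sub_cancel_left, Algebra.smul_def]
  exact J.mul_mem_left _ hwJ

/-- The shear `a₂ + μ * a₃` makes `a₃` a multiple of it locally at `q`. -/
lemma notMem_of_transcendentalMod (hR : D.Admissible R) {q : Ideal T} (hq : q ∈ D.special)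
    {a₂ a₃ μ γ : T} (h₂ : a₂ ∈ R) (h₃ : a₃ ∈ R) (hμ : TranscendentalMod R q μ)
    (hγ : ∀ r s, r * a₃ = s * (a₂ + μ * a₃) → γ ∣ r) : γ ∉ q := by
  intro hγq
  obtain ⟨r, hr, s, hs, hrs, hor⟩ := hR.isValuativeAt q hq a₂ h₂ a₃ h₃
  have hdvd : γ ∣ s + r * μ := hγ _ r (by linear_combination -hrs)
  have hmem := hμ (C ⟨s, hs⟩ + C ⟨r, hr⟩ * X) <| by
    simpa [Algebra.algebraMap_ofSubring] using q.mem_of_dvd hdvd hγq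
  exact hor.elim (fun h ↦ h (by simpa [coeff_C] using hmem 1))
    fun h ↦ h (by simpa [coeff_C] using hmem 0)

end Admissible

end FiberData

lemma exists_generating_relation {T : Type*} [CommRing T] [IsDomain T]
    [UniqueFactorizationMonoid T] (a b : T) :
    ∃ α β, α * b = β * a ∧ ∀ r s, r * b = s * a → α ∣ r ∧ β ∣ s := by
  by_cases h0 : a = 0 ∧ b = 0
  · exact ⟨1, 1, by simp [h0], fun r s _ ↦ ⟨one_dvd r, one_dvd s⟩⟩
  obtain ⟨α, β, g, hrel, rfl, rfl⟩ : ∃ α β g : T, IsRelPrime α β ∧ g * α = a ∧ g * β = b := by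
    rcases not_and_or.1 h0 with ha | hb
    · exact UniqueFactorizationMonoid.exists_reduced_factors a ha b
    · exact UniqueFactorizationMonoid.exists_reduced_factors' a b hb
  have hg : g ≠ 0 := by
    rintro rfl
    simp at h0
  refine ⟨α, β, by ring, fun r s hrs ↦ ?_⟩
  have hrs' : r * β = s * α := mul_left_cancel₀ hg (by linear_combination hrs)
  exact ⟨hrel.dvd_of_dvd_mul_right (hrs' ▸ dvd_mul_left α s),
    hrel.symm.dvd_of_dvd_mul_right (hrs' ▸ dvd_mul_left β r)⟩

/-- `R'` is an extension of `R` of the same cardinality, up to countable cardinals. -/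
structure IsSmallExt {T : Type u} [CommRing T] (R R' : Subring T) : Prop where
  le : R ≤ R'
  mk_le : #R' ≤ max #R ℵ₀

namespace IsSmallExt

variable {T : Type u} [CommRing T] {R R' R'' : Subring T}

lemma refl (R : Subring T) : IsSmallExt R R := ⟨le_rfl, le_max_left _ _⟩

lemma trans (h : IsSmallExt R R') (h' : IsSmallExt R' R'') : IsSmallExt R R'' :=
  ⟨h.le.trans h'.le, h'.mk_le.trans (max_le h.mk_le (le_max_right _ _))⟩

lemma mk_lt (h : IsSmallExt R R') {κ : Cardinal} (hκ : ℵ₀ < κ) (hR : #R < κ) : #R' < κ :=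
  h.mk_le.trans_lt (max_lt hR hκ)

protected lemma adjoin (R : Subring T) (s : T) : IsSmallExt R (adjoin R s) where
  le := le_adjoin R s
  mk_le := by
    refine (mk_le_of_surjective (f := fun f : R[X] ↦
      (⟨aeval s f, aeval_mem_adjoin s f⟩ : adjoin R s)) ?_).trans cardinalMk_le_max
    rintro ⟨x, hx⟩
    obtain ⟨f, hf⟩ := mem_adjoin_iff.1 hx
    exact ⟨f, Subtype.ext hf⟩

end IsSmallExt

namespace FiberData.Admissible

section LinearEquations

variable {k T : Type u} [Field k] [CommRing T] [IsDomain T] [Algebra k T] {D : FiberData T}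
  {R : Subring T}

lemma isValuativeAt_adjoin_adjoin (hR : D.Admissible R) {q : Ideal T} (hq : q ∈ D.special)
    {a₁ a₂ c s₁ s₂ r s : T} (h₁ : a₁ ∈ R) (hc : c ∈ R) (ha₁ : a₁ ≠ 0)
    (h : s₁ * a₁ + s₂ * a₂ = c) (hr : r ∈ R) (hs : s ∈ R) (hrs : r * a₂ = s * a₁) (hrq : r ∉ q)
    (hs₂ : q ∈ D.controlled R → TranscendentalMod R q s₂) :
    IsValuativeAt (adjoin (adjoin R s₂) s₁) q := by
  have hqp := D.isPrime_of_mem q hq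
  obtain ⟨r', hr', s', hs', hrs', hor⟩ := hR.isValuativeAt q hq c hc a₁ h₁
  have hs₁ : r * s' = r' * (r * s₁ + s * s₂) := by
    refine mul_right_cancel₀ ha₁ ?_
    linear_combination (-r) * hrs' - r * r' * h + r' * s₂ * hrs
  have hr'q : r' ∉ q := by
    intro hr'q
    have hmem : r * s' ∈ q := hs₁ ▸ q.mul_mem_right _ hr'q
    exact hor.elim (· hr'q) (· ((hqp.mem_or_mem hmem).resolve_left hrq))
  have hle := le_adjoin R s₂
  refine (hR.isValuativeAt_adjoin hq hs₂).of_hasDenominatorsOutside (le_adjoin _ _) <|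
    HasDenominatorsOutside.adjoin (hle (mul_mem hr hr')) (hqp.mul_notMem hrq hr'q) ?_
  rw [show r * r' * s₁ = r * s' - r' * s * s₂ by linear_combination - hs₁]
  exact sub_mem (hle (mul_mem hr hs')) (mul_mem (hle (mul_mem hr' hs)) (self_mem_adjoin R s₂))

variable [UniqueFactorizationMonoid T]

/-- The solutions `(s₁, s₂)` form a coset of the multiples of some `(β, -α)`, and at each special
prime one of `α`, `β` is a unit by valuativity. Hence `s₂` or `s₁` can be made transcendental there,
and valuativity again provides a denominator for the other one. -/
lemma exists_solution_pair (hk : ℵ₀ < #k) (hR : D.Admissible R) (hcard : #R < #k)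
    {a₁ a₂ c t₁ t₂ : T} (h₁ : a₁ ∈ R) (h₂ : a₂ ∈ R) (hc : c ∈ R) (ha₁ : a₁ ≠ 0)
    (h : t₁ * a₁ + t₂ * a₂ = c) :
    ∃ s₁ s₂, s₁ * a₁ + s₂ * a₂ = c ∧ D.Admissible (adjoin (adjoin R s₂) s₁) := by
  classical
  obtain ⟨α, β, hαβ, hdvd⟩ := exists_generating_relation a₁ a₂
  have hα : α ∉ D.generic := fun hα ↦ hR.notMem_generic h₁ ha₁ <|
    Ideal.mem_of_dvd _ (hdvd a₁ a₂ (mul_comm _ _)).1 hα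
  obtain ⟨z, hz⟩ := hR.exists_transcendentalMod_add_smul hk hcard {(t₁, β), (t₂, -α)}
  set s₁ := t₁ + z • β with hs₁
  set s₂ := t₂ + z • -α with hs₂
  have hsol : s₁ * a₁ + s₂ * a₂ = c := by
    rw [hs₁, hs₂, Algebra.smul_def, Algebra.smul_def]
    linear_combination h - algebraMap k T z * hαβ
  have trans₁ (q) (hq : q ∈ D.controlled R) (hβ : β ∉ q) : TranscendentalMod R q s₁ :=
    hz q hq (t₁, β) (by simp) hβ
  have trans₂ (q) (hq : q ∈ D.controlled R) (hα : α ∉ q) : TranscendentalMod R q s₂ :=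
    hz q hq (t₂, -α) (by simp) (by rwa [neg_mem_iff])
  refine ⟨s₁, s₂, hsol, ?_, fun q hq ↦ ?_⟩
  · have := D.generic_isPrime
    have hle := le_adjoin R s₂
    refine (hR.contractsToZero.adjoin_of_transcendentalMod
      (trans₂ _ (.inl rfl) hα)).of_hasDenominatorsOutside <|
        HasDenominatorsOutside.adjoin (hle h₁) (hR.notMem_generic h₁ ha₁) ?_
    rw [show a₁ * s₁ = c - s₂ * a₂ by linear_combination hsol]
    exact sub_mem (hle hc) (mul_mem (self_mem_adjoin R s₂) (hle h₂))
  · obtain ⟨r, hr, s, hs, hrs, hor⟩ := hR.isValuativeAt q hq a₂ h₂ a₁ h₁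
    by_cases hrq : r ∈ q
    · have hsq : s ∉ q := hor.resolve_left (not_not.2 hrq)
      have ha₂ : a₂ ≠ 0 := by
        rintro rfl
        have hs0 : s = 0 := by simpa [ha₁] using hrs.symm
        exact hsq (hs0 ▸ q.zero_mem)
      rw [adjoin_comm]
      exact hR.isValuativeAt_adjoin_adjoin hq h₂ hc ha₂ (by rw [add_comm, hsol]) hs hr hrs.symm hsq
        fun hq' ↦ trans₁ q hq' fun hβ ↦ hsq (q.mem_of_dvd (hdvd r s hrs).2 hβ)
    · exact hR.isValuativeAt_adjoin_adjoin hq h₁ hc ha₁ hsol hr hs hrs hrq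
        fun hq' ↦ trans₂ q hq' fun hα ↦ hrq (q.mem_of_dvd (hdvd r s hrs).1 hα)

lemma exists_elimination (hk : ℵ₀ < #k) (hR : D.Admissible R) (hcard : #R < #k)
    {a₁ a₂ a₃ c : T} {S : Set T} (h₁ : a₁ ∈ R) (ha₁ : a₁ ≠ 0) (h₂ : a₂ ∈ R) (h₃ : a₃ ∈ R)
    (h : c ∈ Ideal.span (insert a₁ (insert a₂ (insert a₃ S)))) :
    ∃ R', IsSmallExt R R' ∧ D.Admissible R' ∧ ∃ μ ∈ R', ∃ s ∈ R',
      c - s * a₃ ∈ Ideal.span (insert a₁ (insert (a₂ + μ * a₃) S)) := by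
  obtain ⟨μ, -, hμ⟩ := hR.exists_transcendentalMod_sub_mem hk hcard (J := ⊤) Module.Finite.fg_top
    (fun q hq ↦ top_le_iff.not.2 (isPrime_of_mem_controlled hq).ne_top) 0
  obtain ⟨α, β, hαβ, hα⟩ := exists_generating_relation a₁ a₃
  obtain ⟨γ, δ, hγδ, hγ⟩ := exists_generating_relation (a₂ + μ * a₃) a₃
  have hnle (q) (hq : q ∈ D.controlled (adjoin R μ)) : ¬ Ideal.span {α, γ} ≤ q := by
    rw [Ideal.span_le, Set.pair_subset_iff]
    rintro ⟨hαq, hγq⟩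
    have ha₁q : a₁ ∈ q := q.mem_of_dvd (hα a₁ a₃ (mul_comm _ _)).1 hαq
    rcases hq with rfl | ⟨hq, -⟩
    · exact hR.notMem_generic h₁ ha₁ ha₁q
    · exact hR.notMem_of_transcendentalMod hq h₂ h₃ (hμ q (.inr ⟨hq, a₁, h₁, ha₁, ha₁q⟩))
        (fun r s hrs ↦ (hγ r s hrs).1) hγq
  obtain ⟨u₁, x₁, hx₁, rfl⟩ := Ideal.mem_span_insert.1 h
  obtain ⟨u₂, x₂, hx₂, rfl⟩ := Ideal.mem_span_insert.1 hx₁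
  obtain ⟨u₃, x₃, hx₃, rfl⟩ := Ideal.mem_span_insert.1 hx₂
  have hext := IsSmallExt.adjoin R μ
  obtain ⟨s, hs, htrans⟩ := (hR.adjoin hμ).exists_transcendentalMod_sub_mem hk
    (hext.mk_lt hk hcard) (Submodule.fg_span (by simp)) hnle (u₃ - μ * u₂)
  obtain ⟨x, y, hxy⟩ := Ideal.mem_span_pair.1 hs
  refine ⟨_, hext.trans (.adjoin _ s), (hR.adjoin hμ).adjoin htrans, μ,
    le_adjoin _ s (self_mem_adjoin R μ), s, self_mem_adjoin _ s, Ideal.mem_span_insert.2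
      ⟨u₁ - x * β, _, Ideal.mem_span_insert.2 ⟨u₂ - y * δ, x₃, hx₃, rfl⟩, ?_⟩⟩
  linear_combination a₃ * hxy - x * hαβ - y * hγδ

lemma exists_mem_span_insert_insert (hk : ℵ₀ < #k) {a₁ : T} (ha₁ : a₁ ≠ 0) (F : Finset T) :
    ∀ (R : Subring T) (a₂ c : T), D.Admissible R → #R < #k → a₁ ∈ R → a₂ ∈ R →
      (F : Set T) ⊆ R → c ∈ R → c ∈ Ideal.span (insert a₁ (insert a₂ (F : Set T))) →
      ∃ R', IsSmallExt R R' ∧ D.Admissible R' ∧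
        c ∈ Submodule.span R' (insert a₁ (insert a₂ (F : Set T))) := by
  classical
  induction F using Finset.induction_on with
  | empty =>
    intro R a₂ c hR hcard h₁ h₂ _ hc h
    rw [Finset.coe_empty, insert_empty_eq] at h ⊢
    obtain ⟨t₁, t₂, h⟩ := Ideal.mem_span_pair.1 h
    obtain ⟨s₁, s₂, hsol, hadm⟩ := hR.exists_solution_pair hk hcard h₁ h₂ hc ha₁ h
    exact ⟨_, (IsSmallExt.adjoin R s₂).trans (.adjoin _ s₁), hadm, Submodule.mem_span_pair.2
      ⟨⟨s₁, self_mem_adjoin _ s₁⟩, ⟨s₂, le_adjoin _ s₁ (self_mem_adjoin R s₂)⟩, hsol⟩⟩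
  | insert a₃ F _ ih =>
    intro R a₂ c hR hcard h₁ h₂ hF hc h
    rw [Finset.coe_insert] at hF h ⊢
    obtain ⟨h₃, hF⟩ := Set.insert_subset_iff.1 hF
    obtain ⟨R₁, hext, hR₁, μ, hμ, s, hs, hcs⟩ := hR.exists_elimination hk hcard h₁ ha₁ h₂ h₃ h
    have h₃' := hext.le h₃
    obtain ⟨R₂, hext₂, hR₂, hspan⟩ := ih R₁ (a₂ + μ * a₃) (c - s * a₃) hR₁ (hext.mk_lt hk hcard)
      (hext.le h₁) (add_mem (hext.le h₂) (mul_mem hμ h₃')) (hF.trans hext.le)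
      (sub_mem (hext.le hc) (mul_mem hs h₃')) hcs
    refine ⟨R₂, hext.trans hext₂, hR₂, ?_⟩
    set M := Submodule.span R₂ (insert a₁ (insert a₂ (insert a₃ (F : Set T))))
    have smul_mem {r : T} (hr : r ∈ R₁) : r * a₃ ∈ M :=
      M.smul_mem ⟨r, hext₂.le hr⟩ (Submodule.subset_span (by simp))
    have hle : Submodule.span R₂ (insert a₁ (insert (a₂ + μ * a₃) (F : Set T))) ≤ M := by
      refine Submodule.span_le.2 (Set.insert_subset (Submodule.subset_span (by simp))
        (Set.insert_subset ?_ fun x hx ↦ Submodule.subset_span (by simp [Finset.mem_coe.1 hx])))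
      exact add_mem (Submodule.subset_span (by simp)) (smul_mem hμ)
    simpa using add_mem (hle hspan) (smul_mem hs)

theorem exists_mem_span (hk : ℵ₀ < #k) (hR : D.Admissible R) (hcard : #R < #k) {F : Finset T}
    (hF : (F : Set T) ⊆ R) {c : T} (hc : c ∈ R) (h : c ∈ Ideal.span (F : Set T)) :
    ∃ R', IsSmallExt R R' ∧ D.Admissible R' ∧ c ∈ Submodule.span R' (F : Set T) := by
  by_cases hF0 : ∃ a ∈ F, a ≠ 0
  · obtain ⟨a, ha, ha0⟩ := hF0
    have hins : insert a (insert a (F : Set T)) = F := by simp [ha]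
    rw [← hins] at h ⊢
    exact exists_mem_span_insert_insert hk ha0 F R a c hR hcard (hF ha) (hF ha) hF hc h
  · push Not at hF0
    rw [Ideal.span_eq_bot.2 hF0, Ideal.mem_bot] at h
    exact ⟨R, .refl R, hR, h ▸ zero_mem _⟩

end LinearEquations

end FiberData.Admissible

section TransfiniteUnion

lemma exists_cofinal_enumeration {X : Type u} [Nonempty X] {κ : Cardinal.{u}} (hκ : ℵ₀ ≤ κ)
    (hX : #X ≤ κ) :
    ∃ (W : Type u) (_ : LinearOrder W) (_ : WellFoundedLT W) (_ : Nonempty W) (e : W → X),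
      (∀ a : W, #(Set.Iio a) < κ) ∧ ∀ x b, ∃ a, b < a ∧ e a = x := by
  induction κ using Cardinal.inductionOn with
  | mk W =>
  obtain ⟨_, _, hord⟩ := exists_ord_eq_type_lt W
  have : Infinite W := infinite_iff.2 hκ
  obtain ⟨f⟩ : Nonempty (X × W ↪ W) := by
    rw [← Cardinal.le_def, mk_prod, lift_id, lift_id]
    exact mul_le_of_le hκ hX le_rfl
  refine ⟨W, inferInstance, inferInstance, inferInstance, fun a ↦ (Function.invFun f a).1,
    fun a ↦ mk_Iio_lt a hord, fun x b ↦ ?_⟩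
  by_contra! hcon
  have hfib (z) : f (x, z) ≤ b := by
    by_contra! hlt
    exact hcon _ hlt (by rw [Function.leftInverse_invFun f.injective])
  refine (mk_Iic_lt b hord hκ).not_ge ?_
  exact mk_le_of_injective (f := fun z ↦ (⟨f (x, z), hfib z⟩ : Set.Iic b)) fun z w h ↦
    congr(($(f.injective (Subtype.ext_iff.1 h))).2)

variable {T : Type u} [CommRing T]

lemma mk_bot_subring_le_aleph0 : #(⊥ : Subring T) ≤ ℵ₀ := by
  have hsurj : Function.Surjective fun n : ℤ ↦ (⟨n, intCast_mem _ n⟩ : (⊥ : Subring T)) := by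
    rintro ⟨x, hx⟩
    obtain ⟨n, rfl⟩ := Subring.mem_bot.1 hx
    exact ⟨n, rfl⟩
  exact mk_le_aleph0_iff.2 hsurj.countable

lemma mk_iSup_le_of_directed {ι : Type u} {S : ι → Subring T} (hS : Directed (· ≤ ·) S)
    {κ : Cardinal.{u}} (hκ : ℵ₀ ≤ κ) (hι : #ι ≤ κ) (h : ∀ i, #(S i) ≤ κ) :
    #(⨆ i, S i : Subring T) ≤ κ := by
  cases isEmpty_or_nonempty ι
  · rw [iSup_of_empty]
    exact mk_bot_subring_le_aleph0.trans hκ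
  · change #((⨆ i, S i : Subring T) : Set T) ≤ κ
    rw [Subring.coe_iSup_of_directed hS]
    exact (mk_iUnion_le _).trans (mul_le_of_le hκ hι (ciSup_le' h))

theorem exists_subring_of_small_extensions {X : Type u} [Nonempty X] {κ : Cardinal.{u}}
    (hκ : ℵ₀ < κ) (hX : #X ≤ κ) {Good : Subring T → Prop} {Task : X → Subring T → Subring T → Prop}
    (hsup : ∀ {ι : Type u} {S : ι → Subring T}, Directed (· ≤ ·) S → (∀ i, Good (S i)) →
      Good (⨆ i, S i))
    (hstep : ∀ x R, Good R → #R < κ → ∃ R', IsSmallExt R R' ∧ Good R' ∧ Task x R R') :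
    ∃ A, Good A ∧ ∀ x (F : Finset T), (F : Set T) ⊆ A →
      ∃ R R' : Subring T, (F : Set T) ⊆ R ∧ R' ≤ A ∧ Task x R R' := by
  obtain ⟨W, _, _, _, e, hIio, he⟩ := exists_cofinal_enumeration hκ.le hX
  have hnext (x R) : ∃ R', IsSmallExt R R' ∧ (Good R → #R < κ → Good R' ∧ Task x R R') := by
    by_cases h : Good R ∧ #R < κ
    · obtain ⟨R', hext, hR'⟩ := hstep x R h.1 h.2
      exact ⟨R', hext, fun _ _ ↦ hR'⟩
    · exact ⟨R, .refl R, fun hgood hlt ↦ (h ⟨hgood, hlt⟩).elim⟩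
  choose next hext hnext using hnext
  let S : W → Subring T := wellFounded_lt.fix fun a rec ↦ next (e a) (⨆ b : Set.Iio a, rec b b.2)
  let prior (a : W) : Subring T := ⨆ b : Set.Iio a, S b
  have hS (a) : S a = next (e a) (prior a) := wellFounded_lt.fix_eq _ a
  have hSext (a) : IsSmallExt (prior a) (S a) := hS a ▸ hext _ _
  have hlt {a b} (hab : a < b) : S a ≤ prior b := le_iSup (fun c : Set.Iio b ↦ S c) ⟨a, hab⟩
  have hmono : Monotone S := monotone_iff_forall_lt.2 fun a b hab ↦ (hlt hab).trans (hSext b).le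
  have hdir (a : W) : Directed (· ≤ ·) fun b : Set.Iio a ↦ S b :=
    Monotone.directed_le fun _ _ h ↦ hmono h
  have hprior_le (a) : #(prior a) ≤ max #(Set.Iio a) ℵ₀ := by
    induction a using WellFoundedLT.induction with
    | ind a ih =>
      refine mk_iSup_le_of_directed (hdir a) (le_max_right _ _) (le_max_left _ _) fun b ↦ ?_
      refine (hSext b).mk_le.trans (max_le ((ih b b.2).trans ?_) (le_max_right _ _))
      exact max_le_max_right _ (mk_le_mk_of_subset (Set.Iio_subset_Iio b.2.le))
  have hcard (a) : #(prior a) < κ := (hprior_le a).trans_lt (max_lt (hIio a) hκ)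
  have hprior (a) : Good (prior a) := by
    induction a using WellFoundedLT.induction with
    | ind a ih => exact hsup (hdir a) fun b ↦ hS b ▸ (hnext _ _ (ih b b.2) (hcard b)).1
  have hgood (a) := hnext (e a) (prior a) (hprior a) (hcard a)
  refine ⟨⨆ a, S a, hsup hmono.directed_le fun a ↦ hS a ▸ (hgood a).1, fun x F hF ↦ ?_⟩
  rw [Subring.coe_iSup_of_directed hmono.directed_le] at hF
  have hdirS : Directed (· ⊆ ·) fun a ↦ (S a : Set T) := hmono.directed_le
  obtain ⟨b, hb⟩ := hdirS.exists_mem_subset_of_finset_subset_biUnion hF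
  obtain ⟨a, hab, rfl⟩ := he x b
  exact ⟨prior a, S a, hb.trans (hlt hab), le_iSup S a, hS a ▸ (hgood a).2⟩

end TransfiniteUnion

lemma contractsToZero_bot (k : Type*) {T : Type u} [Field k] [CommRing T] [Algebra k T]
    {P : Ideal T} (hP : P ≠ ⊤) : ContractsToZero ⊥ P := by
  intro x hx hxP
  obtain ⟨n, rfl⟩ := Subring.mem_bot.1 hx
  rw [← map_intCast (algebraMap k T)] at hxP ⊢
  by_contra hn
  have hunit : IsUnit (n : k) := (ne_zero_of_map hn).isUnit
  exact hP (P.eq_top_of_isUnit_mem hxP (hunit.map _))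

lemma ContractsToZero.isValuativeAt {T : Type u} [CommRing T] {R : Subring T} {q : Ideal T}
    [q.IsPrime] (h : ContractsToZero R q) : IsValuativeAt R q := by
  intro a ha b hb
  by_cases hbq : b ∈ q
  · exact ⟨0, zero_mem R, 1, one_mem R, by simp [h b hb hbq], .inr q.one_notMem⟩
  · exact ⟨b, hb, a, ha, mul_comm b a, .inl hbq⟩

lemma mem_span_of_le {T : Type*} [CommRing T] {R R' : Subring T} (hle : R ≤ R') {S : Set T} {c : T}
    (hc : c ∈ Submodule.span R S) : c ∈ Submodule.span R' S := by
  induction hc using Submodule.span_induction with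
  | mem x hx => exact Submodule.subset_span hx
  | zero => exact zero_mem _
  | add x y _ _ hx hy => exact add_mem hx hy
  | smul r x _ hx => exact Submodule.smul_mem _ (⟨r, hle r.2⟩ : R') hx

namespace FiberData

variable {T : Type u} [CommRing T] {D : FiberData T} {R : Subring T}

namespace Admissible

lemma bot (k : Type*) [Field k] [Algebra k T] : D.Admissible ⊥ where
  contractsToZero := contractsToZero_bot k D.generic_isPrime.ne_top
  isValuativeAt q hq :=
    have := D.isPrime_of_mem q hq
    (contractsToZero_bot k this.ne_top).isValuativeAt

lemma iSup_of_directed {ι : Type*} [Nonempty ι] {S : ι → Subring T} (hS : Directed (· ≤ ·) S)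
    (h : ∀ i, D.Admissible (S i)) : D.Admissible (⨆ i, S i) where
  contractsToZero x hx := by
    obtain ⟨i, hi⟩ := (Subring.mem_iSup_of_directed hS).1 hx
    exact (h i).contractsToZero x hi
  isValuativeAt q hq a ha b hb := by
    obtain ⟨i, hi⟩ := (Subring.mem_iSup_of_directed hS).1 ha
    obtain ⟨j, hj⟩ := (Subring.mem_iSup_of_directed hS).1 hb
    obtain ⟨m, him, hjm⟩ := hS i j
    obtain ⟨r, hr, s, hs, hrs⟩ := (h m).isValuativeAt q hq a (him hi) b (hjm hj)
    exact ⟨r, le_iSup S m hr, s, le_iSup S m hs, hrs⟩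

end Admissible

/-- The requests that have to be served along the transfinite construction; finite sets stand for
the ideals of `T` that they generate. -/
inductive Task (T : Type u)
  | approximate (c : T)
  | solve (F : Finset T) (c : T)
  | meet (F : Finset T)
  | avoid (F : Finset T) (c : T)

/-- Passing from `R` to `R'` serves the given task: `approximate c` provides an approximation of `c`
modulo `J`, `solve F c` a solution of a linear equation with coefficients `F` that is solvable over
`T`, `meet F` a nonzero element of the ideal generated by `F`, and `avoid F c` an element of that
ideal outside all special primes containing `c`. -/
def Serves (D : FiberData T) (J : Ideal T) : Task T → Subring T → Subring T → Prop
  | .approximate c, _, R' => ∃ s ∈ R', s - c ∈ J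
  | .solve F c, R, R' => (F : Set T) ⊆ R → c ∈ R → c ∈ Ideal.span (F : Set T) →
      c ∈ Submodule.span R' (F : Set T)
  | .meet F, _, R' => ¬ Ideal.span (F : Set T) ≤ D.generic →
      (∀ q ∈ D.special, Ideal.span (F : Set T) ≤ q → Ideal.span (F : Set T) = q) →
      ∃ s ∈ R', s ≠ 0 ∧ s ∈ Ideal.span (F : Set T)
  | .avoid F c, R, R' => ¬ Ideal.span (F : Set T) ≤ D.generic →
      (∀ q ∈ D.special, ¬ Ideal.span (F : Set T) ≤ q) → c ∈ R → c ≠ 0 →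
      ∃ s ∈ R', s ∈ Ideal.span (F : Set T) ∧ ∀ q ∈ D.special, c ∈ q → s ∉ q

lemma mk_task_le {κ : Cardinal.{u}} (hκ : ℵ₀ < κ) (hT : #T ≤ κ) : #(Task T) ≤ κ := by
  let code : Task T → Fin 4 × Finset T × T
    | .approximate c => (0, ∅, c)
    | .solve F c => (1, F, c)
    | .meet F => (2, F, 0)
    | .avoid F c => (3, F, c)
  have hcode : Function.Injective code := by
    rintro (_ | _ | _ | _) (_ | _ | _ | _) h <;> simp_all [code]
  have hF : #(Finset T) ≤ κ := by
    cases finite_or_infinite T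
    · exact (mk_le_aleph0 (α := Finset T)).trans hκ.le
    · rwa [mk_finset_of_infinite]
  refine (mk_le_of_injective hcode).trans ?_
  simp only [mk_prod, lift_id, lift_uzero]
  refine mul_le_of_le hκ.le ?_ (mul_le_of_le hκ.le hF hT)
  simpa using (natCast_lt_aleph0 (n := 4)).le.trans hκ.le

section Field

variable {k : Type u} [Field k] [Algebra k T]

lemma Admissible.exists_serves_meet [IsDomain T] (hk : ℵ₀ < #k) (hR : D.Admissible R)
    (hcard : #R < #k) (J : Ideal T) (F : Finset T) :
    ∃ R', IsSmallExt R R' ∧ D.Admissible R' ∧ D.Serves J (.meet F) R R' := by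
  by_cases hmeet : (¬ Ideal.span (F : Set T) ≤ D.generic ∧
      ∀ q ∈ D.special, Ideal.span (F : Set T) ≤ q → Ideal.span (F : Set T) = q) ∧
      ∀ s ∈ R, s ∈ Ideal.span (F : Set T) → s = 0
  · obtain ⟨⟨hgen, hspec⟩, hzero⟩ := hmeet
    have hnle : ∀ q ∈ D.controlled R, ¬ Ideal.span (F : Set T) ≤ q := by
      rintro q (rfl | ⟨hq, x, hx, hx0, hxq⟩) hle
      · exact hgen hle
      · exact hx0 (hzero x hx (hspec q hq hle ▸ hxq))
    obtain ⟨s, hsF, hs⟩ := hR.exists_transcendentalMod_sub_mem hk hcard ⟨F, rfl⟩ hnle 0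
    have := D.generic_isPrime
    refine ⟨adjoin R s, .adjoin R s, hR.adjoin hs, fun _ _ ↦
      ⟨s, self_mem_adjoin R s, ?_, by simpa using hsF⟩⟩
    rintro rfl
    exact (hs _ (.inl rfl)).notMem (zero_mem _)
  · refine ⟨R, .refl R, hR, fun hgen hspec ↦ ?_⟩
    by_contra! h
    exact hmeet ⟨⟨hgen, hspec⟩, fun s hs hsF ↦ by_contra fun hs0 ↦ h s hs hs0 hsF⟩

lemma Admissible.exists_serves_avoid [IsDomain T] (hk : ℵ₀ < #k) (hR : D.Admissible R)
    (hcard : #R < #k) (J : Ideal T) (F : Finset T) (c : T) :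
    ∃ R', IsSmallExt R R' ∧ D.Admissible R' ∧ D.Serves J (.avoid F c) R R' := by
  by_cases havoid : ¬ Ideal.span (F : Set T) ≤ D.generic ∧
      ∀ q ∈ D.special, ¬ Ideal.span (F : Set T) ≤ q
  · have hnle : ∀ q ∈ D.controlled R, ¬ Ideal.span (F : Set T) ≤ q := by
      rintro q (rfl | hq)
      exacts [havoid.1, havoid.2 q hq.1]
    obtain ⟨s, hsF, hs⟩ := hR.exists_transcendentalMod_sub_mem hk hcard ⟨F, rfl⟩ hnle 0
    refine ⟨adjoin R s, .adjoin R s, hR.adjoin hs, fun _ _ hc hc0 ↦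
      ⟨s, self_mem_adjoin R s, by simpa using hsF, fun q hq hcq ↦ ?_⟩⟩
    have := D.isPrime_of_mem q hq
    exact (hs q (.inr ⟨hq, c, hc, hc0, hcq⟩)).notMem
  · exact ⟨R, .refl R, hR, fun hgen hspec ↦ (havoid ⟨hgen, hspec⟩).elim⟩

lemma Admissible.exists_serves [IsDomain T] [UniqueFactorizationMonoid T] (hk : ℵ₀ < #k)
    {J : Ideal T} (hJ : J.FG) (hgen : ¬ J ≤ D.generic) (hspec : ∀ q ∈ D.special, ¬ J ≤ q)
    (x : Task T) (R : Subring T) (hR : D.Admissible R) (hcard : #R < #k) :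
    ∃ R', IsSmallExt R R' ∧ D.Admissible R' ∧ D.Serves J x R R' := by
  rcases x with c | ⟨F, c⟩ | F | ⟨F, c⟩
  · have hnle : ∀ q ∈ D.controlled R, ¬ J ≤ q := by
      rintro q (rfl | hq)
      exacts [hgen, hspec q hq.1]
    obtain ⟨s, hsJ, hs⟩ := hR.exists_transcendentalMod_sub_mem hk hcard hJ hnle c
    exact ⟨adjoin R s, .adjoin R s, hR.adjoin hs, s, self_mem_adjoin R s, hsJ⟩
  · by_cases hsolve : (F : Set T) ⊆ R ∧ c ∈ R ∧ c ∈ Ideal.span (F : Set T)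
    · obtain ⟨R', hext, hR', hc⟩ := hR.exists_mem_span hk hcard hsolve.1 hsolve.2.1 hsolve.2.2
      exact ⟨R', hext, hR', fun _ _ _ ↦ hc⟩
    · exact ⟨R, .refl R, hR, fun hF hc h ↦ (hsolve ⟨hF, hc, h⟩).elim⟩
  · exact hR.exists_serves_meet hk hcard J F
  · exact hR.exists_serves_avoid hk hcard J F c

end Field

/-- The properties of the subring produced by the transfinite construction: it is admissible and
closed under all tasks. -/
structure IsSaturated (D : FiberData T) (J : Ideal T) (A : Subring T) : Prop
    extends D.Admissible A where
  exists_sub_mem (c : T) : ∃ s ∈ A, s - c ∈ J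
  mem_span {F : Finset T} (hF : (F : Set T) ⊆ A) {c : T} (hc : c ∈ A)
    (h : c ∈ Ideal.span (F : Set T)) : c ∈ Submodule.span A (F : Set T)
  exists_ne_zero_mem {I : Ideal T} (hgen : ¬ I ≤ D.generic)
    (hspec : ∀ q ∈ D.special, I ≤ q → I = q) : ∃ s ∈ A, s ≠ 0 ∧ s ∈ I
  exists_mem_notMem {I : Ideal T} (hgen : ¬ I ≤ D.generic) (hspec : ∀ q ∈ D.special, ¬ I ≤ q)
    {c : T} (hc : c ∈ A) (hc0 : c ≠ 0) : ∃ s ∈ A, s ∈ I ∧ ∀ q ∈ D.special, c ∈ q → s ∉ q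

theorem exists_isSaturated {k : Type u} [Field k] [Algebra k T] [IsDomain T] [IsNoetherianRing T]
    [UniqueFactorizationMonoid T] (hk : ℵ₀ < #k) (hT : #T ≤ #k) {J : Ideal T}
    (hgen : ¬ J ≤ D.generic) (hspec : ∀ q ∈ D.special, ¬ J ≤ q) :
    ∃ A, D.IsSaturated J A := by
  have hfg (I : Ideal T) : I.FG := IsNoetherian.noetherian I
  have : Nonempty (Task T) := ⟨.approximate 0⟩
  obtain ⟨A, hA, hserves⟩ := exists_subring_of_small_extensions (Good := D.Admissible) hk
    (mk_task_le hk hT)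
    (fun {ι S} hS h ↦ by
      cases isEmpty_or_nonempty ι
      · exact iSup_of_empty S ▸ .bot k
      · exact .iSup_of_directed hS h)
    (Admissible.exists_serves hk (hfg J) hgen hspec)
  refine ⟨A, hA, fun c ↦ ?_, fun {F} hF c hc h ↦ ?_, fun {I} hgen hspec ↦ ?_,
    fun {I} hgen hspec c hc hc0 ↦ ?_⟩
  · obtain ⟨_, _, -, hle, s, hs, hsJ⟩ := hserves (.approximate c) ∅ (by simp)
    exact ⟨s, hle hs, hsJ⟩
  · classical
    obtain ⟨R, R', hFR, hle, hx⟩ := hserves (.solve F c) (insert c F)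
      (by simpa [Set.insert_subset_iff] using ⟨hc, hF⟩)
    rw [Finset.coe_insert, Set.insert_subset_iff] at hFR
    exact mem_span_of_le hle (hx hFR.2 hFR.1 h)
  · obtain ⟨F, rfl⟩ := hfg I
    obtain ⟨_, _, -, hle, hx⟩ := hserves (.meet F) ∅ (by simp)
    obtain ⟨s, hs, h⟩ := hx hgen hspec
    exact ⟨s, hle hs, h⟩
  · obtain ⟨F, rfl⟩ := hfg I
    obtain ⟨_, _, hcR, hle, hx⟩ := hserves (.avoid F c) {c} (by simpa using hc)
    obtain ⟨s, hs, h⟩ := hx hgen hspec (hcR (by simp)) hc0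
    exact ⟨s, hle hs, h⟩

end FiberData

section Completion

lemma exists_adicCompletion_algEquiv {R S : Type*} [CommRing R] [CommRing S] [Algebra R S]
    {I : Ideal R} {J : Ideal S} [IsAdicComplete J S]
    (hcomap : ∀ n, (J ^ n).comap (algebraMap R S) = I ^ n)
    (hdense : ∀ n, ∀ c : S, ∃ a : R, algebraMap R S a - c ∈ J ^ n) :
    Nonempty (AdicCompletion I R ≃ₐ[R] S) := by
  have bijective (n : ℕ) :
      Function.Bijective (Ideal.quotientMapₐ (J ^ n) (Algebra.ofId R S) (hcomap n).ge) := by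
    refine ⟨Ideal.quotientMap_injective' (H := (hcomap n).ge) (hcomap n).le, fun y ↦ ?_⟩
    obtain ⟨c, rfl⟩ := Ideal.Quotient.mk_surjective y
    obtain ⟨a, ha⟩ := hdense n c
    exact ⟨Ideal.Quotient.mk _ a, Ideal.Quotient.eq.2 ha⟩
  let g (n : ℕ) : (R ⧸ I ^ n) ≃ₐ[R] S ⧸ J ^ n := .ofBijective _ (bijective n)
  have factor_g {m n : ℕ} (hle : m ≤ n) (x : R ⧸ I ^ n) :
      Ideal.Quotient.factorₐ R (Ideal.pow_le_pow_right hle) (g n x) =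
        g m (Ideal.Quotient.factorₐ R (Ideal.pow_le_pow_right hle) x) := by
    obtain ⟨a, rfl⟩ := Ideal.Quotient.mk_surjective x
    rfl
  have factor_eval {m n : ℕ} (hle : m ≤ n) (x : AdicCompletion I R) :
      Ideal.Quotient.factorₐ R (Ideal.pow_le_pow_right hle) (AdicCompletion.evalₐ I n x) =
        AdicCompletion.evalₐ I m x := by
    obtain ⟨y, rfl⟩ := AdicCompletion.mk_surjective _ _ x
    rw [AdicCompletion.evalₐ_mk, AdicCompletion.evalₐ_mk]
    exact AdicCompletion.Ideal.mk_eq_mk I hle y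
  let toS : AdicCompletion I R →ₐ[R] S :=
    IsAdicComplete.liftAlgHom J (fun n ↦ (g n).toAlgHom.comp (AdicCompletion.evalₐ I n))
      fun hle ↦ AlgHom.ext fun x ↦ by
        simpa using! (factor_g hle _).trans congr(g _ $(factor_eval hle x))
  let inv : S →ₐ[R] AdicCompletion I R :=
    AdicCompletion.liftAlgHom I (fun n ↦ (g n).symm.toAlgHom.comp (Ideal.Quotient.mkₐ R (J ^ n)))
      fun {m n} hle ↦ AlgHom.ext fun x ↦ by
        refine (g m).injective ?_
        simpa using! (factor_g hle ((g n).symm (Ideal.Quotient.mk _ x))).symm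
  refine ⟨.ofAlgHom toS inv (IsAdicComplete.algHom_ext (I := J) fun n ↦ ?_)
    (AlgHom.ext fun x ↦ AdicCompletion.ext_evalₐ fun n ↦ ?_)⟩
  · ext x
    simp [toS, inv]
  · simp [toS, inv]

variable {A T : Type*} [CommRing A] [CommRing T] [Algebra A T]

lemma exists_algebraMap_sub_mem_pow_map {I : Ideal A}
    (h : ∀ c : T, ∃ a : A, algebraMap A T a - c ∈ I.map (algebraMap A T)) (n : ℕ) (c : T) :
    ∃ a : A, algebraMap A T a - c ∈ I.map (algebraMap A T) ^ n := by
  have mem_iff (n : ℕ) (c : T) : c ∈ (Algebra.linearMap A T).range ⊔ I ^ n • ⊤ ↔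
      ∃ a : A, algebraMap A T a - c ∈ I.map (algebraMap A T) ^ n := by
    simp only [Submodule.mem_sup, LinearMap.mem_range, exists_exists_eq_and, Ideal.smul_top_eq_map,
      Ideal.map_pow, Submodule.restrictScalars_mem, Algebra.linearMap_apply]
    refine exists_congr fun a ↦ ⟨?_, fun ha ↦ ⟨_, neg_mem ha, by ring⟩⟩
    rintro ⟨z, hz, rfl⟩
    simpa using hz
  have key : (Algebra.linearMap A T).range ⊔ I ^ n • ⊤ = ⊤ := by
    induction n with
    | zero => rw [pow_zero, Ideal.one_eq_top, Submodule.top_smul, sup_top_eq]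
    | succ n ih =>
      have h1 : (⊤ : Submodule A T) = (Algebra.linearMap A T).range ⊔ I • ⊤ :=
        top_unique (fun c _ ↦ by simpa using (mem_iff 1 c).2 (by simpa using h c)) |>.symm
      refine top_unique (ih.ge.trans (sup_le le_sup_left ?_))
      calc I ^ n • (⊤ : Submodule A T)
          = I ^ n • (Algebra.linearMap A T).range ⊔ I ^ (n + 1) • ⊤ := by
            rw [pow_succ, mul_smul, ← Submodule.smul_sup, ← h1]
        _ ≤ (Algebra.linearMap A T).range ⊔ I ^ (n + 1) • ⊤ :=
            sup_le_sup_right Submodule.smul_le_right _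
  exact (mem_iff n c).1 (key.ge trivial)

lemma map_maximalIdeal_of_dense [IsLocalRing A] [IsLocalRing T] [IsNoetherianRing T]
    [IsLocalHom (algebraMap A T)]
    (h : ∀ c : T, ∃ a : A, algebraMap A T a - c ∈ maximalIdeal T ^ 2) :
    (maximalIdeal A).map (algebraMap A T) = maximalIdeal T := by
  refine le_antisymm (((local_hom_TFAE (algebraMap A T)).out 0 2).1 ‹_›) ?_
  refine Submodule.le_of_le_smul_of_le_jacobson_bot (I := maximalIdeal T)
    (IsNoetherian.noetherian _) (IsLocalRing.jacobson_eq_maximalIdeal ⊥ bot_ne_top).ge ?_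
  intro c hc
  obtain ⟨a, ha⟩ := h c
  have ham : algebraMap A T a ∈ maximalIdeal T := by
    simpa using (maximalIdeal T).add_mem (Ideal.pow_le_self two_ne_zero ha) hc
  rw [smul_eq_mul, ← pow_two, ← sub_sub_cancel (algebraMap A T a) c]
  refine sub_mem (Submodule.mem_sup_left (Ideal.mem_map_of_mem _ ?_)) (Submodule.mem_sup_right ha)
  simpa using! ham

/-- Every finitely generated ideal of `A` is the contraction of its extension to `T`. If `A` is
local and dense in the complete Noetherian local ring `T`, this makes `T` the completion of `A`. -/
def FGIdealsContracted (A T : Type*) [CommRing A] [CommRing T] [Algebra A T] : Prop :=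
  ∀ I : Ideal A, I.FG → (I.map (algebraMap A T)).comap (algebraMap A T) = I

namespace FGIdealsContracted

lemma dvd_of_algebraMap_dvd (hA : FGIdealsContracted A T) {a b : A}
    (h : algebraMap A T a ∣ algebraMap A T b) : a ∣ b := by
  rw [← Ideal.mem_span_singleton, ← hA (Ideal.span {a}) (Submodule.fg_span_singleton a),
    Ideal.mem_comap, Ideal.map_span, Set.image_singleton]
  exact Ideal.mem_span_singleton.2 h

lemma isLocalHom (hA : FGIdealsContracted A T) : IsLocalHom (algebraMap A T) :=
  ⟨fun a ha ↦ by
    rw [isUnit_iff_dvd_one, ← map_one (algebraMap A T)] at ha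
    exact isUnit_iff_dvd_one.2 (hA.dvd_of_algebraMap_dvd ha)⟩

lemma isLocalRing [IsLocalRing T] (hA : FGIdealsContracted A T) : IsLocalRing A :=
  have := hA.isLocalHom
  RingHom.domain_isLocalRing (algebraMap A T)

lemma algebraMap_injective (hA : FGIdealsContracted A T) :
    Function.Injective (algebraMap A T) := by
  rw [RingHom.injective_iff_ker_eq_bot, RingHom.ker, ← Ideal.map_bot (f := algebraMap A T)]
  exact hA ⊥ Submodule.fg_bot

variable [IsNoetherianRing T]

lemma isNoetherianRing (hA : FGIdealsContracted A T) : IsNoetherianRing A := by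
  classical
  rw [isNoetherianRing_iff_ideal_fg]
  intro I
  obtain ⟨F, hFI, hspan⟩ := (Submodule.fg_span_iff_fg_span_finset_subset _).1
    (IsNoetherian.noetherian (I.map (algebraMap A T)))
  obtain ⟨G, hGI, rfl⟩ := Finset.subset_set_image_iff.1 hFI
  refine ⟨G, le_antisymm (Ideal.span_le.2 hGI) ?_⟩
  rw [← Ideal.submodule_span_eq, ← hA (Submodule.span A G) ⟨G, rfl⟩, ← Ideal.map_le_iff_le_comap,
    Ideal.submodule_span_eq, Ideal.map_span, ← Finset.coe_image]
  exact hspan.le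

lemma comap_map (hA : FGIdealsContracted A T) (I : Ideal A) :
    (I.map (algebraMap A T)).comap (algebraMap A T) = I :=
  have := hA.isNoetherianRing
  hA I (IsNoetherian.noetherian I)

variable [IsLocalRing T] [IsAdicComplete (maximalIdeal T) T] [IsLocalRing A]

lemma exists_completion_algEquiv (hA : FGIdealsContracted A T)
    (h : ∀ c : T, ∃ a : A, algebraMap A T a - c ∈ maximalIdeal T ^ 2) :
    Nonempty (AdicCompletion (maximalIdeal A) A ≃ₐ[A] T) := by
  have := hA.isLocalHom
  have hm := map_maximalIdeal_of_dense h
  refine exists_adicCompletion_algEquiv (J := maximalIdeal T) (fun n ↦ ?_) ?_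
  · rw [← hm, ← Ideal.map_pow, hA.comap_map]
  · rw [← hm]
    refine exists_algebraMap_sub_mem_pow_map fun c ↦ (h c).imp fun a ha ↦ ?_
    exact hm ▸ Ideal.pow_le_self two_ne_zero ha

lemma flat (hA : FGIdealsContracted A T)
    (h : ∀ c : T, ∃ a : A, algebraMap A T a - c ∈ maximalIdeal T ^ 2) : Module.Flat A T := by
  have := hA.isNoetherianRing
  obtain ⟨e⟩ := hA.exists_completion_algEquiv h
  exact .of_linearEquiv e.symm.toLinearEquiv

end FGIdealsContracted

end Completion

section Descent

variable {A T : Type*} [CommRing A] [CommRing T] [IsDomain T] [Algebra A T]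

/-- In `T` the multiples `r * b` divisible by `a` are those with `α ∣ r`. By flatness the generating
relation `α * b = β * a` is a combination of relations over `A`, and one of them must be a unit
multiple of it since `T` is local. -/
lemma exists_forall_dvd_mul_iff [UniqueFactorizationMonoid T] [IsLocalRing T] [Module.Flat A T]
    (hdvd : ∀ a b : A, algebraMap A T a ∣ algebraMap A T b → a ∣ b) {a : A}
    (ha : algebraMap A T a ≠ 0) (b : A) : ∃ c : A, ∀ r, a ∣ r * b ↔ c ∣ r := by
  obtain ⟨α, β, hαβ, hgen⟩ := exists_generating_relation (algebraMap A T a) (algebraMap A T b)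
  have hα : α ≠ 0 := by
    rintro rfl
    exact ha (zero_dvd_iff.1 (hgen _ (algebraMap A T b) (mul_comm _ _)).1)
  have hrel : ∑ i : Fin 2, (![b, -a] i) • (![α, β] i) = 0 := by
    simp only [Fin.sum_univ_two, Matrix.cons_val_zero, Matrix.cons_val_one, Algebra.smul_def,
      map_neg]
    linear_combination hαβ
  obtain ⟨l, m, y, hy, hm⟩ := Module.Flat.isTrivialRelation_of_sum_smul_eq_zero (R := A) hrel
  have hm' (j : Fin l) : m 0 j * b = m 1 j * a := by
    simpa [Fin.sum_univ_two, mul_comm, ← sub_eq_add_neg, sub_eq_zero] using hm j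
  have hαm (j : Fin l) : α ∣ algebraMap A T (m 0 j) :=
    (hgen _ (algebraMap A T (m 1 j)) (by rw [← map_mul, hm', map_mul])).1
  choose w hw using hαm
  have hsum : ∑ j, w j * y j = 1 := by
    refine mul_left_cancel₀ hα ?_
    calc α * ∑ j, w j * y j = ∑ j, m 0 j • y j := by
          simp only [Finset.mul_sum, Algebra.smul_def, hw, mul_assoc]
      _ = α * 1 := by rw [mul_one]; exact (hy 0).symm
  obtain ⟨j, -, hj⟩ := IsLocalRing.exists_of_isUnit_sum (hsum ▸ isUnit_one)
  have hwj : IsUnit (w j) := isUnit_of_mul_isUnit_left hj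
  refine ⟨m 0 j, fun r ↦ ⟨fun ⟨s, hs⟩ ↦ hdvd _ _ ?_, fun hr ↦ ?_⟩⟩
  · rw [hw, hwj.mul_right_dvd]
    refine (hgen _ (algebraMap A T s) ?_).1
    rw [← map_mul, hs, mul_comm, map_mul]
  · exact (Dvd.intro_left _ (hm' j).symm).trans (mul_dvd_mul_right hr b)

lemma uniqueFactorizationMonoid_of_exists_forall_dvd_mul_iff [IsDomain A] [IsNoetherianRing A]
    (h : ∀ a b : A, a ≠ 0 → ∃ c, ∀ r, a ∣ r * b ↔ c ∣ r) : UniqueFactorizationMonoid A := by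
  refine { irreducible_iff_prime := fun {p} ↦ ⟨fun hp ↦ ?_, Prime.irreducible⟩ }
  refine ⟨hp.ne_zero, hp.not_isUnit, fun x y hxy ↦ ?_⟩
  obtain ⟨c, hc⟩ := h p x hp.ne_zero
  have hcp : c ∣ p := (hc p).1 (dvd_mul_right p x)
  rcases hp.dvd_iff.1 hcp with hu | hu
  · exact .inl (by simpa using (hc 1).2 hu.dvd)
  · exact .inr (hu.dvd.trans ((hc y).1 (by rwa [mul_comm])))

end Descent

section WeierstrassPreparation

lemma exists_monic_prime_dvd {R : Type*} [CommRing R] [IsDomain R] [UniqueFactorizationMonoid R]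
    {g : R[X]} (hg : g.Monic) (hunit : ¬ IsUnit g) : ∃ p : R[X], p.Monic ∧ Prime p ∧ p ∣ g := by
  obtain ⟨p, hp, w, rfl⟩ := WfDvdMonoid.exists_irreducible_factor hunit hg.ne_zero
  have hlead : p.leadingCoeff * w.leadingCoeff = 1 := by rw [← leadingCoeff_mul, hg.leadingCoeff]
  have hassoc : Associated p (p * C w.leadingCoeff) :=
    associated_mul_unit_right _ _ ((IsUnit.of_mul_eq_one_right _ hlead).map C)
  exact ⟨p * C w.leadingCoeff, by rw [Monic, leadingCoeff_mul, leadingCoeff_C, hlead],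
    hassoc.prime hp.prime, hassoc.symm.dvd.trans (dvd_mul_right _ _)⟩

variable {R : Type*} [CommRing R] [IsLocalRing R]

lemma isDistinguishedAt_of_dvd {g p : R[X]} (hg : g.IsDistinguishedAt (maximalIdeal R))
    (hp : p.Monic) (hpg : p ∣ g) : p.IsDistinguishedAt (maximalIdeal R) := by
  have hdvd : p.map (residue R) ∣ X ^ g.natDegree := by
    rw [← show g.map (residue R) = X ^ g.natDegree from hg.map_eq_X_pow]
    exact Polynomial.map_dvd _ hpg
  obtain ⟨j, -, hj⟩ := (dvd_prime_pow prime_X _).1 hdvd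
  have hmap : p.map (residue R) = X ^ j :=
    eq_of_monic_of_associated (hp.map _) (monic_X_pow j) hj
  have hdeg : p.natDegree = j := by
    rw [← hp.natDegree_map (residue R), hmap, natDegree_X_pow]
  refine ⟨⟨fun {i} hi ↦ ?_⟩, hp⟩
  rw [← residue_eq_zero_iff, ← coeff_map, hmap, coeff_X_pow, if_neg (by omega)]

variable [IsAdicComplete (maximalIdeal R) R]

lemma prime_coe_of_isDistinguishedAt {p : R[X]} (hp : p.IsDistinguishedAt (maximalIdeal R))
    (hprime : Prime p) : Prime (p : PowerSeries R) := by
  have hp0 : (p : PowerSeries R) ≠ 0 := by simpa using hprime.ne_zero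
  have : IsDomain (R[X] ⧸ Ideal.span {p}) :=
    (Ideal.Quotient.isDomain_iff_prime _).2 ((Ideal.span_singleton_prime hprime.ne_zero).2 hprime)
  rw [← Ideal.span_singleton_prime hp0, ← Ideal.Quotient.isDomain_iff_prime]
  exact hp.algEquivQuotient.symm.toMulEquiv.isDomain _

lemma prime_of_irreducible_of_map_residue_ne_zero [IsDomain R]
    [UniqueFactorizationMonoid R]
    {f : PowerSeries R} (hf : Irreducible f) (hres : f.map (residue R) ≠ 0) : Prime f := by
  obtain ⟨g, h, H⟩ := PowerSeries.exists_isWeierstrassFactorization hres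
  have hunit : ¬ IsUnit g := fun hu ↦ hf.not_isUnit <| by
    rw [H.eq_mul]
    exact (hu.map (coeToPowerSeries.ringHom (R := R))).mul H.isUnit
  obtain ⟨p, hp, hprime, w, rfl⟩ := exists_monic_prime_dvd H.isDistinguishedAt.monic hunit
  have hcoe : Prime (p : PowerSeries R) := prime_coe_of_isDistinguishedAt
    (isDistinguishedAt_of_dvd H.isDistinguishedAt hp (dvd_mul_right _ _)) hprime
  have hfactor : f = p * (w * h) := by rw [H.eq_mul, coe_mul, mul_assoc]
  rw [hfactor]
  exact (associated_mul_unit_right _ _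
    ((hf.isUnit_or_isUnit hfactor).resolve_left hcoe.not_isUnit)).prime hcoe

end WeierstrassPreparation

section LinearSubstitution

open MvPowerSeries

variable {σ τ υ k : Type*} [CommRing k]

lemma hasSubst_linearForms [Finite σ] [Fintype τ] (M : Matrix σ τ k) :
    HasSubst fun i ↦ ∑ j, M i j • (X j : MvPowerSeries τ k) :=
  hasSubst_of_constantCoeff_zero fun i ↦ by simp

variable [Fintype σ] [Fintype τ] [Fintype υ]

/-- The substitution of the linear form `∑ j, M i j • X j` for the variable `X i`. -/
noncomputable def linearSubst (M : Matrix σ τ k) : MvPowerSeries σ k →ₐ[k] MvPowerSeries τ k :=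
  substAlgHom (hasSubst_linearForms M)

lemma linearSubst_X (M : Matrix σ τ k) (i : σ) :
    linearSubst M (X i) = ∑ j, M i j • X j :=
  substAlgHom_X _ _

lemma linearSubst_linearSubst (M : Matrix σ τ k) (N : Matrix τ υ k) (f : MvPowerSeries σ k) :
    linearSubst N (linearSubst M f) = linearSubst (M * N) f := by
  have hforms : (fun i ↦ linearSubst N (∑ j, M i j • X j)) =
      fun i ↦ ∑ l, (M * N) i l • (X l : MvPowerSeries υ k) := by
    funext i
    simp only [map_sum, map_smul, linearSubst_X, Finset.smul_sum, smul_smul, Matrix.mul_apply,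
      Finset.sum_smul]
    exact Finset.sum_comm
  simp only [linearSubst] at hforms ⊢
  rw [substAlgHom_comp_substAlgHom_apply, substAlgHom_apply, substAlgHom_apply, hforms]

lemma linearSubst_one [DecidableEq σ] (f : MvPowerSeries σ k) :
    linearSubst (1 : Matrix σ σ k) f = f := by
  have hforms : (fun i ↦ ∑ j, (1 : Matrix σ σ k) i j • X j) =
      (X : σ → MvPowerSeries σ k) := by
    funext i
    simp [Matrix.one_apply]
  rw [linearSubst, substAlgHom_apply, hforms, subst_self, id]

/-- The linear change of coordinates given by an invertible matrix. -/
noncomputable def linearSubstEquiv [DecidableEq σ] (M : Matrix σ σ k) (hM : IsUnit M.det) :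
    MvPowerSeries σ k ≃ₐ[k] MvPowerSeries σ k :=
  .ofAlgHom (linearSubst M) (linearSubst M⁻¹)
    (AlgHom.ext fun f ↦ by
      simp [linearSubst_linearSubst, Matrix.nonsing_inv_mul M hM, linearSubst_one])
    (AlgHom.ext fun f ↦ by
      simp [linearSubst_linearSubst, Matrix.mul_nonsing_inv M hM, linearSubst_one])

/-- The restriction of a power series to the line spanned by `v`. -/
noncomputable def lineRestriction (v : σ → k) : MvPowerSeries σ k →ₐ[k] PowerSeries k :=
  linearSubst (Matrix.replicateCol Unit v)

lemma lineRestriction_linearSubst (M : Matrix σ τ k) (v : τ → k) (f : MvPowerSeries σ k) :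
    lineRestriction v (linearSubst M f) = lineRestriction (M.mulVec v) f := by
  rw [lineRestriction, linearSubst_linearSubst, ← Matrix.replicateCol_mulVec, lineRestriction]

lemma coeff_lineRestriction [DecidableEq σ] (v : σ → k) (f : MvPowerSeries σ k) (d : ℕ) :
    PowerSeries.coeff d (lineRestriction v f) =
      MvPolynomial.eval v (truncFinset k (Finset.finsuppAntidiag Finset.univ d) f) := by
  have coeff_prod (m : σ →₀ ℕ) :
      coeff (Finsupp.single () d)
        (m.prod fun i e ↦ (∑ j, Matrix.replicateCol Unit v i j • (X j : PowerSeries k)) ^ e) =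
      if m.degree = d then m.prod fun i e ↦ v i ^ e else 0 := by
    have hprod : (m.prod fun i e ↦ (v i • (PowerSeries.X : PowerSeries k)) ^ e) =
        (m.prod fun i e ↦ v i ^ e) • PowerSeries.X ^ m.degree := by
      simp only [Finsupp.prod, _root_.smul_pow, Finset.prod_smul, Finset.prod_pow_eq_pow_sum,
        Finsupp.degree_apply]
    simp only [Finset.univ_unique, Finset.sum_singleton, Matrix.replicateCol_apply]
    refine (congrArg (PowerSeries.coeff d) hprod).trans ?_
    simp [PowerSeries.coeff_X_pow, eq_comm]
  have degree_eq_iff (m : σ →₀ ℕ) :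
      m ∈ Finset.finsuppAntidiag Finset.univ d ↔ m.degree = d := by
    simp [Finset.mem_finsuppAntidiag, Finsupp.degree_eq_sum]
  rw [PowerSeries.coeff, lineRestriction, linearSubst, substAlgHom_apply,
    coeff_subst (hasSubst_linearForms _), truncFinset_apply, map_sum]
  simp only [coeff_prod]
  rw [finsum_eq_sum_of_support_subset (s := Finset.finsuppAntidiag Finset.univ d)]
  · refine Finset.sum_congr rfl fun m hm ↦ ?_
    rw [if_pos ((degree_eq_iff m).1 hm), MvPolynomial.eval_monomial, smul_eq_mul]
  · intro m hm
    rw [Finset.mem_coe, degree_eq_iff]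
    by_contra hdeg
    simp [hdeg] at hm

lemma exists_lineRestriction_ne_zero [IsDomain k] [Infinite k] {f : MvPowerSeries σ k}
    (hf : f ≠ 0) (i : σ) : ∃ v : σ → k, v i ≠ 0 ∧ lineRestriction v f ≠ 0 := by
  classical
  obtain ⟨m, hm⟩ := (ne_zero_iff_exists_coeff_ne_zero f).1 hf
  let P := truncFinset k (Finset.finsuppAntidiag Finset.univ m.degree) f
  have hP : P ≠ 0 := fun h ↦ hm <| by
    rw [← coeff_truncFinset_of_mem (s := Finset.finsuppAntidiag Finset.univ m.degree) f
      (by simp [Finset.mem_finsuppAntidiag, Finsupp.degree_eq_sum])]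
    exact congrArg (MvPolynomial.coeff m) h
  obtain ⟨v, hv⟩ : ∃ v, MvPolynomial.eval v (MvPolynomial.X i * P) ≠ 0 := by
    by_contra! h
    exact mul_ne_zero (MvPolynomial.X_ne_zero i) hP (MvPolynomial.funext (by simpa using h))
  rw [map_mul, MvPolynomial.eval_X] at hv
  refine ⟨v, left_ne_zero_of_mul hv, fun h ↦ right_ne_zero_of_mul hv ?_⟩
  rw [← coeff_lineRestriction, h, map_zero]

end LinearSubstitution

section PowerSeriesUFD

variable {k : Type*} [Field k] {n : ℕ}

lemma map_residue_finSuccEquiv_ne_zero {f : MvPowerSeries (Fin (n + 1)) k}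
    (hf : lineRestriction (Pi.single 0 1) f ≠ 0) :
    (MvPowerSeries.finSuccEquiv k n f).map (residue (MvPowerSeries (Fin n) k)) ≠ 0 := by
  refine fun h ↦ hf (PowerSeries.ext fun d ↦ ?_)
  have hcoeff : MvPowerSeries.coeff (Finsupp.cons d 0) f = 0 := by
    have hd := congrArg (PowerSeries.coeff d) h
    rw [PowerSeries.coeff_map, map_zero, residue_eq_zero_iff, mem_maximalIdeal, mem_nonunits_iff,
      MvPowerSeries.isUnit_iff_constantCoeff, isUnit_iff_ne_zero, not_not] at hd
    rwa [← MvPowerSeries.coeff_coeff_finSuccEquiv]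
  rw [coeff_lineRestriction, MvPowerSeries.truncFinset_apply, map_sum, map_zero]
  refine Finset.sum_eq_zero fun m hm ↦ ?_
  rw [MvPolynomial.eval_monomial]
  by_cases htail : ∀ i : Fin n, m i.succ = 0
  · have hm' : m = Finsupp.cons d 0 := by
      ext i
      induction i using Fin.cases with
      | zero => simpa [Fin.sum_univ_succ, htail] using (Finset.mem_finsuppAntidiag.1 hm).1
      | succ i => simpa using htail i
    rw [hm', hcoeff, zero_mul]
  · push Not at htail
    obtain ⟨i, hi⟩ := htail
    rw [Finsupp.prod, Finset.prod_eq_zero (Finsupp.mem_support_iff.2 hi), mul_zero]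
    rw [Pi.single_eq_of_ne (Fin.succ_ne_zero i), zero_pow hi]

lemma exists_ringEquiv_map_residue_ne_zero [Infinite k] {f : MvPowerSeries (Fin (n + 1)) k}
    (hf : f ≠ 0) : ∃ e : MvPowerSeries (Fin (n + 1)) k ≃+* PowerSeries (MvPowerSeries (Fin n) k),
      (e f).map (residue (MvPowerSeries (Fin n) k)) ≠ 0 := by
  obtain ⟨v, hv, hvf⟩ := exists_lineRestriction_ne_zero hf 0
  let M : Matrix (Fin (n + 1)) (Fin (n + 1)) k := (1 : Matrix _ _ k).updateCol 0 v
  have hM : IsUnit M.det := by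
    rw [isUnit_iff_ne_zero, ← Matrix.cramer_apply, Matrix.cramer_one]
    exact hv
  have hMv : M.mulVec (Pi.single 0 1) = v := by
    rw [Matrix.mulVec_single_one]
    ext i
    simp [M]
  refine ⟨((linearSubstEquiv M hM).trans (MvPowerSeries.finSuccEquiv k n)).toRingEquiv,
    map_residue_finSuccEquiv_ne_zero (f := linearSubst M f) ?_⟩
  rwa [lineRestriction_linearSubst, hMv]

end PowerSeriesUFD

section CoordinateIdeals

open MvPowerSeries

variable {σ R : Type*} [CommRing R]

lemma mem_span_X_image_iff (s : Finset σ) {f : MvPowerSeries σ R} :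
    f ∈ Ideal.span (X '' (s : Set σ)) ↔ ∀ m : σ →₀ ℕ, (∀ i ∈ s, m i = 0) → coeff m f = 0 := by
  classical
  constructor
  · intro hf
    induction hf using Submodule.span_induction with
    | mem x hx =>
      obtain ⟨i, hi, rfl⟩ := hx
      exact fun m hm ↦ X_dvd_iff.1 dvd_rfl m (hm i hi)
    | zero => simp
    | add x y _ _ hx hy => exact fun m hm ↦ by rw [map_add, hx m hm, hy m hm, add_zero]
    | smul a x _ hx =>
      intro m hm
      rw [smul_eq_mul, MvPowerSeries.coeff_mul]
      refine Finset.sum_eq_zero fun p hp ↦ ?_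
      rw [hx p.2 fun i hi ↦ ?_, mul_zero]
      have hi' : p.1 i + p.2 i = 0 := by
        rw [← Finsupp.add_apply, Finset.HasAntidiagonal.mem_antidiagonal.1 hp, hm i hi]
      omega
  · induction s using Finset.induction generalizing f with
    | empty => exact fun h ↦ by simp [show f = 0 from MvPowerSeries.ext fun m ↦ h m (by simp)]
    | insert a s _ ih =>
      intro h
      let g : MvPowerSeries σ R := fun m ↦ if m a = 0 then coeff m f else 0
      have coeff_g (m : σ →₀ ℕ) : coeff m g = if m a = 0 then coeff m f else 0 := rfl
      have hg : g ∈ Ideal.span (X '' (s : Set σ)) := ih fun m hm ↦ by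
        rw [coeff_g]
        split_ifs with ha
        · exact h m (by simpa [ha] using hm)
        · rfl
      have hfg : X a ∣ f - g := X_dvd_iff.2 fun m ha ↦ by rw [map_sub, coeff_g, if_pos ha, sub_self]
      rw [Finset.coe_insert, Set.image_insert_eq, Ideal.span_insert, ← sub_add_cancel f g]
      exact add_mem (Ideal.mem_sup_left (Ideal.mem_span_singleton.2 hfg)) (Ideal.mem_sup_right hg)

lemma isPrime_span_X_image [IsDomain R] (s : Finset σ) :
    (Ideal.span (X '' (s : Set σ)) : Ideal (MvPowerSeries σ R)).IsPrime := by
  let e : {i // i ∉ s} ↪ σ := .subtype _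
  suffices Ideal.span (X '' (s : Set σ)) = RingHom.ker (killCompl (R := R) e) by
    rw [this]
    have : IsDomain (MvPowerSeries {i // i ∉ s} R) := NoZeroDivisors.to_isDomain _
    exact RingHom.ker_isPrime _
  ext f
  rw [mem_span_X_image_iff, RingHom.mem_ker]
  refine ⟨fun h ↦ MvPowerSeries.ext fun m ↦ ?_, fun h m hm ↦ ?_⟩
  · rw [coeff_killCompl, map_zero]
    exact h _ fun i hi ↦ Finsupp.embDomain_of_notMem_range _ _ _ (by simpa [e] using hi)
  · obtain ⟨m', rfl⟩ : m ∈ Set.range (Finsupp.embDomain e) := by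
      rw [Finsupp.mem_range_embDomain_iff]
      intro i hi
      exact ⟨⟨i, fun his ↦ Finsupp.mem_support_iff.1 hi (hm i his)⟩, rfl⟩
    rw [← coeff_killCompl, h, map_zero]

variable {k : Type*} [Field k]

lemma maximalIdeal_mvPowerSeries [Finite σ] :
    maximalIdeal (MvPowerSeries σ k) = Ideal.span (Set.range X) := by
  have := Fintype.ofFinite σ
  rw [← Set.image_univ, ← Finset.coe_univ]
  ext f
  rw [mem_span_X_image_iff, mem_maximalIdeal, mem_nonunits_iff, isUnit_iff_constantCoeff,
    isUnit_iff_ne_zero, not_not]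
  refine ⟨fun h m hm ↦ ?_, fun h ↦ h 0 (by simp)⟩
  rwa [show m = 0 from Finsupp.ext (by simpa using hm)]

instance isAdicComplete_mvPowerSeries [Finite σ] :
    IsAdicComplete (maximalIdeal (MvPowerSeries σ k)) (MvPowerSeries σ k) := by
  rw [maximalIdeal_mvPowerSeries]
  infer_instance

lemma span_X_image_insert_gt {a : σ} {s : Finset σ} (ha : a ∉ s) :
    (Ideal.span (X '' (s : Set σ)) : Ideal (MvPowerSeries σ k)) <
      Ideal.span (X '' (insert a s : Set σ)) := by
  classical
  refine lt_of_le_not_ge (Ideal.span_mono (Set.image_mono (Set.subset_insert _ _))) fun hle ↦ ?_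
  have hmem := hle (Ideal.subset_span ⟨a, Set.mem_insert _ _, rfl⟩)
  have := (mem_span_X_image_iff s).1 hmem (Finsupp.single a 1) fun i hi ↦
    Finsupp.single_eq_of_ne (ne_of_mem_of_not_mem hi ha)
  simp [MvPowerSeries.coeff_X] at this

lemma spanFinrank_span_X_image_le (s : Finset σ) :
    (Ideal.span (X '' (s : Set σ)) : Ideal (MvPowerSeries σ k)).spanFinrank ≤ s.card :=
  (Submodule.spanFinrank_span_le_ncard_of_finite (s.finite_toSet.image _)).trans
    ((Set.ncard_image_le s.finite_toSet).trans (Set.ncard_coe_finset s).le)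

lemma height_span_X_image [Finite σ] (s : Finset σ) :
    (Ideal.span (X '' (s : Set σ)) : Ideal (MvPowerSeries σ k)).height = s.card := by
  classical
  refine le_antisymm ?_ ?_
  · refine (Ideal.height_le_spanFinrank _ (isPrime_span_X_image s).ne_top).trans ?_
    exact Nat.cast_le.2 (spanFinrank_span_X_image_le s)
  · induction s using Finset.induction with
    | empty => simp
    | insert a s ha ih =>
      have := isPrime_span_X_image (R := k) s
      have := isPrime_span_X_image (R := k) (insert a s)
      rw [Finset.card_insert_of_notMem ha, Nat.cast_add, Nat.cast_one]
      refine (add_le_add_left ih 1).trans (Ideal.height_add_one_le_of_lt_of_isPrime ?_)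
      rw [Finset.coe_insert]
      exact span_X_image_insert_gt ha

lemma height_maximalIdeal_mvPowerSeries (n : ℕ) :
    (maximalIdeal (MvPowerSeries (Fin n) k)).height = n := by
  rw [maximalIdeal_mvPowerSeries, ← Set.image_univ, ← Finset.coe_univ, height_span_X_image,
    Finset.card_univ, Fintype.card_fin]

variable (k) in
/-- The ideal `(x₁, …, xᵢ)` of `k⟦x₁, …, xₙ⟧`, the prescribed prime of height `i`. -/
noncomputable def coordinateIdeal (n i : ℕ) : Ideal (MvPowerSeries (Fin n) k) :=
  Ideal.span (X '' (({j | (j : ℕ) < i} : Finset (Fin n)) : Set (Fin n)))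

instance isPrime_coordinateIdeal (n i : ℕ) : (coordinateIdeal k n i).IsPrime :=
  isPrime_span_X_image _

lemma coordinateIdeal_mono (n : ℕ) : Monotone (coordinateIdeal k n) := fun i j hij ↦
  Ideal.span_mono <| Set.image_mono fun l hl ↦ by
    simp only [Finset.coe_filter_univ, Set.mem_ofPred_eq] at hl ⊢
    exact hl.trans_le hij

lemma height_coordinateIdeal {n i : ℕ} (hi : i ≤ n) : (coordinateIdeal k n i).height = i := by
  rw [coordinateIdeal, height_span_X_image, Fin.card_filter_val_lt, min_eq_right hi]

lemma spanFinrank_coordinateIdeal_le (n i : ℕ) :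
    (coordinateIdeal k n i).spanFinrank ≤ (coordinateIdeal k n i).height := by
  rw [coordinateIdeal, height_span_X_image]
  exact Nat.cast_le.2 (spanFinrank_span_X_image_le _)

end CoordinateIdeals

section PowerSeriesRing

variable (k : Type*) [Field k]

instance isDomain_mvPowerSeries (n : ℕ) : IsDomain (MvPowerSeries (Fin n) k) :=
  NoZeroDivisors.to_isDomain _

theorem uniqueFactorizationMonoid_mvPowerSeries [Infinite k] :
    ∀ n, UniqueFactorizationMonoid (MvPowerSeries (Fin n) k)
  | 0 => by
    let := ((MvPowerSeries.isEmptyEquiv (σ := Fin 0) (R := k)).toMulEquiv.isField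
      (Field.toIsField k)).toField
    infer_instance
  | n + 1 => by
    have := uniqueFactorizationMonoid_mvPowerSeries n
    have : WfDvdMonoid (MvPowerSeries (Fin (n + 1)) k) := IsNoetherianRing.wfDvdMonoid
    refine ⟨fun {f} ↦ ⟨fun hf ↦ ?_, Prime.irreducible⟩⟩
    obtain ⟨e, he⟩ := exists_ringEquiv_map_residue_ne_zero hf.ne_zero
    exact (MulEquiv.prime_iff e.toMulEquiv).1 (prime_of_irreducible_of_map_residue_ne_zero
      ((MulEquiv.irreducible_iff e.toMulEquiv).2 hf) he)

end PowerSeriesRing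

lemma mk_mvPowerSeries_le {σ : Type v} {k : Type u} [Finite σ] [Nonempty k] (hk : #k ^ ℵ₀ = #k) :
    #(MvPowerSeries σ k) ≤ lift.{v} #k := by
  calc #((σ →₀ ℕ) → k) = lift.{v} #k ^ lift.{u} #(σ →₀ ℕ) := mk_arrow _ _
    _ ≤ lift.{v} #k ^ ℵ₀ := power_le_power_left (by simp) (by simp)
    _ = lift.{v} #k := by rw [← lift_aleph0.{v, u}, ← lift_power, hk]

section PrimesAbove

variable {T : Type*} [CommRing T] {P Q q : Ideal T} {r : T}

/-- The prime ideals that properly contain `P` and whose height is one more than that of `P`. They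
serve as the maximal elements of the formal fibers over the height one primes. -/
def primesAbove (P : Ideal T) : Set (Ideal T) :=
  {q | q.IsPrime ∧ P < q ∧ q.height = P.height + 1}

variable [IsNoetherianRing T]

lemma height_le_spanFinrank_add_one (hq : q ∈ (P ⊔ Ideal.span {r}).minimalPrimes) :
    q.height ≤ P.spanFinrank + 1 := by
  classical
  obtain ⟨s, hcard, hs⟩ := (IsNoetherian.noetherian P).exists_span_finset_card_eq_spanFinrank
  have hspan : P ⊔ Ideal.span {r} = Ideal.span (insert r s : Finset T) := by
    rw [← hs, sup_comm, ← Ideal.span_union, Finset.coe_insert, Set.singleton_union]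
  rw [hspan] at hq
  refine (Ideal.height_le_card_of_mem_minimalPrimes_span_finset hq).trans ?_
  rw [← hcard]
  exact Nat.cast_le.2 (Finset.card_insert_le r s)

variable [P.IsPrime]

lemma mem_minimalPrimes_of_mem_primesAbove (hq : q ∈ primesAbove P) (hrP : r ∉ P) (hrq : r ∈ q) :
    q ∈ (P ⊔ Ideal.span {r}).minimalPrimes := by
  obtain ⟨hqprime, hPq, hheight⟩ := hq
  refine ⟨⟨hqprime, sup_le hPq.le ((Ideal.span_singleton_le_iff_mem _).2 hrq)⟩, ?_⟩
  rintro p ⟨hp, hle⟩ hpq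
  have hPp : P < p := lt_of_le_of_ne (le_sup_left.trans hle) <| by
    rintro rfl
    exact hrP (hle (Ideal.mem_sup_right (Ideal.mem_span_singleton_self r)))
  by_contra hqp
  refine (Ideal.height_strict_mono_of_isPrime_of_isPrime (hpq.lt_of_not_ge hqp)).not_ge ?_
  rw [hheight]
  exact Ideal.height_add_one_le_of_lt_of_isPrime hPp

lemma finite_setOf_mem_primesAbove (hrP : r ∉ P) : {q ∈ primesAbove P | r ∈ q}.Finite :=
  (P ⊔ Ideal.span {r}).finite_minimalPrimes_of_isNoetherianRing.subset
    fun _ hq ↦ mem_minimalPrimes_of_mem_primesAbove hq.1 hrP hq.2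

lemma exists_mem_primesAbove (hP : P.spanFinrank ≤ P.height) [Q.IsPrime] (hPQ : P ≤ Q)
    (hrP : r ∉ P) (hrQ : r ∈ Q) : ∃ q ∈ primesAbove P, r ∈ q := by
  obtain ⟨q, hq, -⟩ := Ideal.exists_minimalPrimes_le (I := P ⊔ Ideal.span {r}) (J := Q)
    (sup_le hPQ ((Ideal.span_singleton_le_iff_mem _).2 hrQ))
  have hqprime : q.IsPrime := hq.isPrime
  have hrq : r ∈ q := hq.le (Ideal.mem_sup_right (Ideal.mem_span_singleton_self r))
  have hPq : P < q := lt_of_le_of_ne (le_sup_left.trans hq.le) (by rintro rfl; exact hrP hrq)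
  refine ⟨q, ⟨hqprime, hPq, le_antisymm ?_ (Ideal.height_add_one_le_of_lt_of_isPrime hPq)⟩, hrq⟩
  exact (height_le_spanFinrank_add_one hq).trans (by gcongr)

end PrimesAbove

section Contraction

variable {T : Type*} [CommRing T] [IsDomain T] [IsNoetherianRing T] {q : Ideal T} [q.IsPrime]

lemma exists_forall_mul_notMem_pow {b : T} (hb : b ≠ 0) : ∃ i, ∀ s ∉ q, s * b ∉ q ^ i := by
  by_contra! hmem
  have : IsNoetherianRing (Localization.AtPrime q) :=
    IsLocalization.isNoetherianRing q.primeCompl _ inferInstance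
  have hloc : algebraMap T (Localization.AtPrime q) b ∈
      ⨅ i : ℕ, maximalIdeal (Localization.AtPrime q) ^ i := by
    refine (Submodule.mem_iInf _).2 fun i ↦ ?_
    obtain ⟨s, hs, hsb⟩ := hmem i
    have hunit : IsUnit (algebraMap T (Localization.AtPrime q) s) :=
      IsLocalization.map_units _ (⟨s, hs⟩ : q.primeCompl)
    rw [← Ideal.unit_mul_mem_iff_mem _ hunit, ← map_mul,
      ← Localization.AtPrime.map_eq_maximalIdeal, ← Ideal.map_pow]
    exact Ideal.mem_map_of_mem _ hsb
  rw [Ideal.iInf_pow_eq_bot_of_isLocalRing _ Ideal.IsPrime.ne_top', Ideal.mem_bot,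
    map_eq_zero_iff _ (IsLocalization.injective _ q.primeCompl_le_nonZeroDivisors)] at hloc
  exact hb hloc

/- If `A` is valuative at `q`, then for `a ∈ q` and `b ∈ p` some power of `a` is a multiple of `b`
locally at `q`: otherwise `b` would lie in all powers of `q`, locally at `q`. -/
lemma IsValuativeAt.comap_eq {A : Subring T} (hA : IsValuativeAt A q) {p : Ideal A} [p.IsPrime]
    (hp : p ≠ ⊥) (hpq : p ≤ q.comap (algebraMap A T)) : q.comap (algebraMap A T) = p := by
  refine le_antisymm (fun a ha ↦ ?_) hpq
  obtain ⟨b, hb, hb0⟩ := Submodule.exists_mem_ne_zero_of_ne_bot hp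
  obtain ⟨i, hi⟩ := exists_forall_mul_notMem_pow (q := q) (b := (b : T))
    (fun h ↦ hb0 (Subtype.ext h))
  obtain ⟨r, hr, s, hs, hrs, hout⟩ := hA ((a : T) ^ i) (pow_mem a.2 i) b b.2
  have hsq : s ∈ q := by
    by_contra hsq
    refine hi s hsq ?_
    rw [← hrs]
    exact Ideal.mul_mem_left _ _ (Ideal.pow_mem_pow (Ideal.mem_comap.1 ha) i)
  have hrq : r ∉ q := hout.resolve_right (not_not.2 hsq)
  have hmem : (⟨r, hr⟩ : A) * a ^ i ∈ p := by
    rw [show (⟨r, hr⟩ : A) * a ^ i = ⟨s, hs⟩ * b from Subtype.ext hrs]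
    exact p.mul_mem_left _ hb
  exact ‹p.IsPrime›.mem_of_pow_mem i
    ((‹p.IsPrime›.mem_or_mem hmem).resolve_left fun hrp ↦ hrq (hpq hrp))

end Contraction

section FiberDimension

variable {A T : Type*} [CommRing A] [CommRing T] [Algebra A T] {p : Ideal A} {c : ℕ∞}

lemma height_primesOver_le (P : p.primesOver T) : Order.height P ≤ P.1.height := by
  have hP : P.1.IsPrime := P.2.1
  rw [(⟨P.1, hP⟩ : PrimeSpectrum T).height_eq_orderHeight]
  exact Order.height_le_height_apply_of_strictMono
    (fun P : p.primesOver T ↦ (⟨P.1, P.2.1⟩ : PrimeSpectrum T)) (fun _ _ h ↦ h) P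

lemma krullDim_primesOver_le (h : ∀ P ∈ p.primesOver T, P.height ≤ c) :
    Order.krullDim (p.primesOver T) ≤ c := by
  rw [Order.krullDim_eq_iSup_height]
  exact iSup_le fun P ↦ WithBot.coe_le_coe.2 ((height_primesOver_le P).trans (h P P.2))

lemma height_primesOver_add_one_le [IsDomain T] {b : A} (hb : b ∈ p) (hb0 : algebraMap A T b ≠ 0)
    (P : p.primesOver T) : Order.height P + 1 ≤ P.1.height := by
  have hP : P.1.IsPrime := P.2.1
  rw [(⟨P.1, hP⟩ : PrimeSpectrum T).height_eq_orderHeight, ← Order.height_coe_withBot]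
  let f : WithBot (p.primesOver T) → PrimeSpectrum T :=
    WithBot.recBotCoe ⊥ fun P ↦ ⟨P.1, P.2.1⟩
  have hf : StrictMono f := by
    refine WithBot.strictMono_iff.2 ⟨fun _ _ h ↦ h, fun P ↦ ?_⟩
    refine lt_of_le_of_ne bot_le fun h ↦ hb0 ?_
    have hover : P.1.LiesOver p := P.2.2
    have hbP : algebraMap A T b ∈ P.1 := (Ideal.mem_of_liesOver P.1 p b).1 hb
    rwa [← show (⊥ : Ideal T) = P.1 from congrArg PrimeSpectrum.asIdeal h] at hbP
  exact Order.height_le_height_apply_of_strictMono f hf P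

lemma krullDim_primesOver_le_of_height_le_add_one [IsDomain T] {b : A} (hb : b ∈ p)
    (hb0 : algebraMap A T b ≠ 0) (h : ∀ P ∈ p.primesOver T, P.height ≤ c + 1) :
    Order.krullDim (p.primesOver T) ≤ c := by
  rw [Order.krullDim_eq_iSup_height]
  refine iSup_le fun P ↦ WithBot.coe_le_coe.2 ?_
  exact (ENat.add_le_add_iff_right ENat.one_ne_top).1
    ((height_primesOver_add_one_le hb hb0 P).trans (h P P.2))

lemma comap_mk_mem_primesOver {q : Ideal T} [q.LiesOver p] {P : Ideal (T ⧸ p.map (algebraMap A T))}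
    [P.IsPrime] (hP : P ≤ q.map (Ideal.Quotient.mk _)) :
    P.comap (Ideal.Quotient.mk _) ∈ p.primesOver T := by
  have hpq : p.map (algebraMap A T) ≤ q := Ideal.map_le_iff_le_comap.2 (q.over_def p).le
  refine ⟨inferInstance, ⟨le_antisymm (fun a ha ↦ ?_) (fun a ha ↦ ?_)⟩⟩
  · rw [Ideal.under_def, Ideal.mem_comap, Ideal.mem_comap,
      Ideal.Quotient.eq_zero_iff_mem.2 (Ideal.mem_map_of_mem _ ha)]
    exact P.zero_mem
  · have hle : P.comap (Ideal.Quotient.mk _) ≤ q := by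
      refine (Ideal.comap_mono hP).trans ?_
      rw [Ideal.comap_map_of_surjective' _ Ideal.Quotient.mk_surjective, Ideal.mk_ker,
        sup_eq_left.2 hpq]
    exact (Ideal.mem_of_liesOver q p a).2 (hle ha)

lemma height_le_height_add_krullDim_primesOver [IsNoetherianRing A] [IsNoetherianRing T]
    [p.IsPrime] (q : Ideal T) [q.IsPrime] [q.LiesOver p] :
    (q.height : WithBot ℕ∞) ≤ p.height + Order.krullDim (p.primesOver T) := by
  let I := p.map (algebraMap A T)
  have hIq : I ≤ q := Ideal.map_le_iff_le_comap.2 (q.over_def p).le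
  let q' : PrimeSpectrum (T ⧸ I) :=
    ⟨q.map (Ideal.Quotient.mk I), Ideal.isPrime_map_quotientMk_of_isPrime hIq⟩
  let f : Set.Iic q' → p.primesOver T := fun P ↦
    ⟨P.1.asIdeal.comap (Ideal.Quotient.mk I), comap_mk_mem_primesOver (q := q) P.2⟩
  have hf : StrictMono f := fun P P' h ↦
    (Ideal.comap_mono h.le).lt_of_ne fun heq ↦ h.ne <| Subtype.ext <| PrimeSpectrum.ext <|
      Ideal.comap_injective_of_surjective _ Ideal.Quotient.mk_surjective heq
  calc (q.height : WithBot ℕ∞)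
    _ ≤ (p.height + q'.asIdeal.height : ℕ∞) :=
      WithBot.coe_le_coe.2 (Ideal.height_le_height_add_of_liesOver p q)
    _ = p.height + Order.krullDim (Set.Iic q') := by
      rw [q'.height_eq_orderHeight, WithBot.coe_add, Order.height_eq_krullDim_Iic]
    _ ≤ p.height + Order.krullDim (p.primesOver T) := by
      gcongr
      exact Order.krullDim_le_of_strictMono f hf

end FiberDimension

section LocalUFD

lemma idealHt_eq_height {A : Type*} [CommRing A] (p : Ideal A) [hp : p.IsPrime] :
    idealHt p = p.height := by
  have hheight : p.height = Order.height (⟨p, hp⟩ : PrimeSpectrum A) :=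
    PrimeSpectrum.height_eq_orderHeight ⟨p, hp⟩
  rw [hheight]
  apply le_antisymm
  · exact iInf₂_le (⟨p, hp⟩ : PrimeSpectrum A) le_rfl
  · exact le_iInf₂ fun _ h ↦ Order.height_mono h

lemma alphaAt_eq_krullDim_primesOver {T : Type u} [CommRing T] (X : LocalUFDWithCompletion T)
    [i : Algebra X.A T] (h : algebraMap X.A T = X.toCompletion) (p : Ideal X.A) (hp : p.IsPrime) :
    alphaAt X p hp = Order.krullDim (p.primesOver T) := by
  obtain rfl : i = X.toCompletion.toAlgebra := Algebra.algebra_ext _ _ (RingHom.congr_fun h)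
  let := X.toCompletion.toAlgebra
  rw [show alphaAt X p hp = ringKrullDim (TensorProduct X.A T p.ResidueField) from rfl,
    ringKrullDim_eq_of_ringEquiv (Algebra.TensorProduct.comm X.A T p.ResidueField).toRingEquiv]
  exact (Order.krullDim_eq_of_orderIso (PrimeSpectrum.primesOverOrderIsoFiber X.A T p)).symm

namespace FGIdealsContracted

lemma isDomain {A T : Type*} [CommRing A] [CommRing T] [IsDomain T] [Algebra A T]
    (hA : FGIdealsContracted A T) : IsDomain A :=
  hA.algebraMap_injective.isDomain (algebraMap A T)

variable {A T : Type u} [CommRing A] [CommRing T] [IsDomain T] [IsNoetherianRing T] [IsLocalRing T]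
  [UniqueFactorizationMonoid T] [IsAdicComplete (maximalIdeal T) T] [Algebra A T]

lemma uniqueFactorizationMonoid (hA : FGIdealsContracted A T)
    (h : ∀ c : T, ∃ a : A, algebraMap A T a - c ∈ maximalIdeal T ^ 2) :
    UniqueFactorizationMonoid A := by
  have := hA.isDomain
  have := hA.isNoetherianRing
  have := hA.isLocalRing
  have := hA.flat h
  exact uniqueFactorizationMonoid_of_exists_forall_dvd_mul_iff fun a b ha ↦
    exists_forall_dvd_mul_iff (T := T) (fun _ _ ↦ hA.dvd_of_algebraMap_dvd)
      ((map_ne_zero_iff _ hA.algebraMap_injective).2 ha) b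

/-- The local unique factorization domain `A` with completion `T`, provided by the closedness of
the finitely generated ideals of `A` together with the density of `A` in `T`. -/
noncomputable abbrev toLocalUFDWithCompletion (hA : FGIdealsContracted A T)
    (h : ∀ c : T, ∃ a : A, algebraMap A T a - c ∈ maximalIdeal T ^ 2) :
    LocalUFDWithCompletion T :=
  have := hA.isLocalRing
  { A
    isDomain := hA.isDomain
    isNoetherian := hA.isNoetherianRing
    isLocalRing := hA.isLocalRing
    ufd := hA.uniqueFactorizationMonoid h
    toCompletion := algebraMap A T
    completionEquiv := (hA.exists_completion_algEquiv h).some.toRingEquiv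
    completionEquiv_comp := (hA.exists_completion_algEquiv h).some.commutes }

lemma alphaAt_toLocalUFDWithCompletion (hA : FGIdealsContracted A T)
    (h : ∀ c : T, ∃ a : A, algebraMap A T a - c ∈ maximalIdeal T ^ 2) (p : Ideal A)
    (hp : p.IsPrime) :
    alphaAt (hA.toLocalUFDWithCompletion h) p hp = Order.krullDim (p.primesOver T) :=
  @alphaAt_eq_krullDim_primesOver T _ (hA.toLocalUFDWithCompletion h) ‹_› rfl p hp

end FGIdealsContracted

end LocalUFD

namespace FiberData.IsSaturated

variable {T : Type u} [CommRing T] {D : FiberData T} {J : Ideal T} {A : Subring T}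

lemma fgIdealsContracted (hA : D.IsSaturated J A) : FGIdealsContracted A T := by
  classical
  rintro _ ⟨F, rfl⟩
  refine le_antisymm (fun c hc ↦ ?_) Ideal.le_comap_map
  have hspan := hA.mem_span (F := F.image A.subtype)
    (by rw [Finset.coe_image]; rintro _ ⟨a, -, rfl⟩; exact a.2) c.2 (by
    rwa [Finset.coe_image, ← Ideal.map_span])
  rw [Finset.coe_image, show ⇑A.subtype = Algebra.linearMap A T from rfl,
    ← Submodule.map_span] at hspan
  obtain ⟨x, hx, hxc⟩ := hspan
  rwa [← Subtype.ext hxc]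

lemma liesOver_bot_generic (hA : D.IsSaturated J A) : D.generic.LiesOver (⊥ : Ideal A) :=
  ⟨le_antisymm bot_le fun a ha ↦ Subtype.ext (hA.contractsToZero a a.2 ha)⟩

variable [IsNoetherianRing T]

lemma krullDim_primesOver_bot [IsDomain T] (hA : D.IsSaturated J A)
    (hspec : ∀ q ∈ D.special, q.height ≤ D.generic.height + 1) :
    Order.krullDim ((⊥ : Ideal A).primesOver T) = D.generic.height := by
  have := D.generic_isPrime
  have := hA.liesOver_bot_generic
  have := hA.fgIdealsContracted.isNoetherianRing
  refine le_antisymm (krullDim_primesOver_le fun I hI ↦ ?_) ?_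
  · have := hI.1
    by_contra! hlt
    obtain ⟨s, hs, hs0, hsI⟩ := hA.exists_ne_zero_mem
      (fun h ↦ hlt.not_ge (Ideal.height_mono h)) fun q hq hIq ↦ by
        have := D.isPrime_of_mem q hq
        by_contra hne
        refine (Ideal.height_strict_mono_of_isPrime_of_isPrime (hIq.lt_of_ne hne)).not_ge ?_
        exact (hspec q hq).trans (Order.add_one_le_of_lt hlt)
    have hmem : (⟨s, hs⟩ : A) ∈ (⊥ : Ideal A) := by rwa [hI.2.1]
    exact hs0 (congrArg Subtype.val hmem)
  · simpa using height_le_height_add_krullDim_primesOver (p := (⊥ : Ideal A)) D.generic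

variable [IsDomain T]

lemma krullDim_primesOver_of_height_eq_one (hA : D.IsSaturated J A) {c : ℕ∞}
    (hspec : ∀ q ∈ D.special, q.height = c + 1) {p : Ideal A} [p.IsPrime] (hp : p.height = 1)
    {q : Ideal T} (hq : q ∈ D.special) (hqp : q.comap (algebraMap A T) = p) :
    Order.krullDim (p.primesOver T) = c := by
  have := D.isPrime_of_mem q hq
  have : q.LiesOver p := ⟨hqp.symm⟩
  have := hA.fgIdealsContracted.isNoetherianRing
  obtain ⟨b, hbp, hb⟩ := Submodule.exists_mem_ne_zero_of_ne_bot (p.ne_bot_of_height_eq_one hp)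
  have hb0 : (b : T) ≠ 0 := fun h ↦ hb (Subtype.ext h)
  refine le_antisymm (krullDim_primesOver_le_of_height_le_add_one hbp hb0 fun I hI ↦ ?_) ?_
  · by_contra! hlt
    have hbI : (b : T) ∈ I := hI.2.1.le hbp
    obtain ⟨s, hs, hsI, hsq⟩ := hA.exists_mem_notMem
      (fun h ↦ hb0 (hA.contractsToZero b b.2 (h hbI)))
      (fun q hq h ↦ ((hspec q hq).symm ▸ hlt).not_ge (Ideal.height_mono h)) b.2 hb0
    have hsp : (⟨s, hs⟩ : A) ∈ p := by rwa [hI.2.1]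
    exact hsq q hq (hqp.ge hbp) (hqp.ge hsp)
  · have hle := height_le_height_add_krullDim_primesOver (p := p) q
    rw [hspec q hq, hp, add_comm] at hle
    exact ENat.WithBot.add_le_add_one_left_iff.1 hle

lemma exists_mem_special_comap_eq [IsLocalRing T] (hA : D.IsSaturated J A)
    (hcover : ∀ r ∈ maximalIdeal T, r ∉ D.generic → ∃ q ∈ D.special, r ∈ q)
    {p : Ideal A} [hp : p.IsPrime] (hprincipal : p.IsPrincipal) (hp0 : p ≠ ⊥) :
    ∃ q ∈ D.special, q.comap (algebraMap A T) = p := by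
  obtain ⟨b, rfl⟩ := hprincipal
  have hb0 : b ≠ 0 := by
    rintro rfl
    exact hp0 (Submodule.span_singleton_eq_bot.2 rfl)
  have hbm : (b : T) ∈ maximalIdeal T := fun hunit ↦ by
    have := hA.fgIdealsContracted.isLocalHom
    exact hp.ne_top (Ideal.span_singleton_eq_top.2 (isUnit_of_map_unit (algebraMap A T) b hunit))
  obtain ⟨q, hq, hbq⟩ := hcover b hbm fun h ↦ hb0 (Subtype.ext (hA.contractsToZero b b.2 h))
  have := D.isPrime_of_mem q hq
  exact ⟨q, hq, (hA.isValuativeAt q hq).comap_eq hp0 ((Ideal.span_singleton_le_iff_mem _).2 hbq)⟩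

end FiberData.IsSaturated

section PrescribedFibers

lemma not_maximalIdeal_sq_le_of_height_lt {T : Type*} [CommRing T] [IsLocalRing T]
    {P : Ideal T} [hP : P.IsPrime]
    (h : P.height < (maximalIdeal T).height) : ¬ maximalIdeal T ^ 2 ≤ P :=
  fun hle ↦ h.not_ge (Ideal.height_mono (hP.le_of_pow_le hle))

variable {T : Type u} [CommRing T] [IsNoetherianRing T]

/-- The fiber data with generic prime `Q` whose special primes are those directly above `P`. -/
def fiberDataOfLE {P Q : Ideal T} [P.IsPrime] (hQ : Q.IsPrime) (hPQ : P ≤ Q) : FiberData T where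
  generic := Q
  special := primesAbove P
  generic_isPrime := hQ
  isPrime_of_mem _ hq := hq.1
  countable_setOf_mem _ hr := (finite_setOf_mem_primesAbove fun hrP ↦ hr (hPQ hrP)).countable

/- The special primes that do not lie over a height one prime of `A` belong to the generic formal
fiber; the bound `P.height + 1 ≤ Q.height + 1` on their heights keeps that fiber of dimension
`Q.height`. -/
theorem exists_localUFDWithCompletion_alphaAt_eq {k : Type u} [Field k] [Algebra k T] [IsDomain T]
    [IsLocalRing T] [UniqueFactorizationMonoid T] [IsAdicComplete (maximalIdeal T) T]
    (hk : ℵ₀ < #k) (hT : #T ≤ #k) {P Q : Ideal T} [P.IsPrime] [hQ : Q.IsPrime] (hPQ : P ≤ Q)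
    (hP : P.spanFinrank ≤ P.height) (hPm : P.height + 1 < (maximalIdeal T).height)
    (hQm : Q.height < (maximalIdeal T).height) :
    ∃ X : LocalUFDWithCompletion T, alphaAt X ⊥ Ideal.isPrime_bot = Q.height ∧
      ∀ (p : Ideal X.A) (hp : p.IsPrime), idealHt p = 1 → alphaAt X p hp = P.height := by
  let D := fiberDataOfLE hQ hPQ
  have := D.generic_isPrime
  have hspec (q : Ideal T) (hq : q ∈ D.special) : q.height = P.height + 1 := hq.2.2
  obtain ⟨A, hA⟩ := D.exists_isSaturated (J := maximalIdeal T ^ 2) hk hT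
    (not_maximalIdeal_sq_le_of_height_lt hQm) fun q hq ↦ by
      have := D.isPrime_of_mem q hq
      exact not_maximalIdeal_sq_le_of_height_lt ((hspec q hq).trans_lt hPm)
  have hcontr : FGIdealsContracted A T := hA.fgIdealsContracted
  have hdense (c : T) : ∃ a : A, algebraMap A T a - c ∈ maximalIdeal T ^ 2 :=
    let ⟨s, hs, hsc⟩ := hA.exists_sub_mem c
    ⟨⟨s, hs⟩, hsc⟩
  have := hcontr.isDomain
  have := hcontr.uniqueFactorizationMonoid hdense
  refine ⟨hcontr.toLocalUFDWithCompletion hdense, ?_, fun (p : Ideal A) hp hheight ↦ ?_⟩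
  · refine (hcontr.alphaAt_toLocalUFDWithCompletion hdense ⊥ _).trans ?_
    exact hA.krullDim_primesOver_bot fun q hq ↦
      (hspec q hq).trans_le (add_le_add_left (Ideal.height_mono hPQ) 1)
  · replace hheight : p.height = 1 := (idealHt_eq_height p).symm.trans hheight
    obtain ⟨q, hq, hqp⟩ := hA.exists_mem_special_comap_eq
      (fun r hrm hr ↦ exists_mem_primesAbove hP (hPQ.trans (le_maximalIdeal hQ.ne_top))
        (fun hrP ↦ hr (hPQ hrP)) hrm)
      (UniqueFactorizationMonoid.isPrincipal_of_height_eq_one hheight)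
      (p.ne_bot_of_height_eq_one hheight)
    exact (hcontr.alphaAt_toLocalUFDWithCompletion hdense p hp).trans
      (hA.krullDim_primesOver_of_height_eq_one hspec hheight hq hqp)

end PrescribedFibers

end FormalFiber

open FormalFiber in
theorem exists_local_UFD_completion_powerSeries_general {k : Type u} [Field k]
    (hk : #k ^ ℵ₀ = #k) {n e t : ℕ} (het : e ≤ t) (htn : t < n) (hen : e + 1 < n) :
    ∃ X : LocalUFDWithCompletion (MvPowerSeries (Fin n) k),
      alphaAt X ⊥ Ideal.isPrime_bot = t ∧
      ∀ (p : Ideal X.A) (hp : p.IsPrime), idealHt p = 1 → alphaAt X p hp = e := by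
  have hk₀ : ℵ₀ < #k := (cantor' ℵ₀ (one_lt_iff_nontrivial.2 inferInstance)).trans_eq hk
  have : Infinite k := infinite_iff.2 hk₀.le
  have := uniqueFactorizationMonoid_mvPowerSeries k n
  have he : (coordinateIdeal k n e).height = e := height_coordinateIdeal (by lia)
  have ht : (coordinateIdeal k n t).height = t := height_coordinateIdeal htn.le
  have hmax := height_maximalIdeal_mvPowerSeries (k := k) n
  obtain ⟨X, hX₀, hX₁⟩ := exists_localUFDWithCompletion_alphaAt_eq hk₀
    ((mk_mvPowerSeries_le hk).trans_eq (lift_uzero _)) (coordinateIdeal_mono n het)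
    (spanFinrank_coordinateIdeal_le n e) (by rw [he, hmax]; exact_mod_cast hen)
    (by rw [ht, hmax]; exact Nat.cast_lt.2 htn)
  rw [ht] at hX₀
  rw [he] at hX₁
  exact ⟨X, hX₀, hX₁⟩

/-- **Example.** Let `T = ℂ[[x₁, …, xₙ]]` with `n ≥ 2`. For any integers `d`, `t` with
`1 ≤ d ≤ n − 1`, `0 ≤ t ≤ n − 1` and `d − 1 ≤ t` there is a local UFD `A` whose
completion is `T` with `α(A, (0)) = t` and `α(A, pA) = d − 1` for every height one prime
ideal `pA` of ` A`. -/
theorem exists_local_UFD_completion_powerSeries (n : ℕ) (hn : 2 ≤ n)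
    (d t : ℕ) (hd1 : 1 ≤ d) (hd2 : d ≤ n - 1) (ht2 : t ≤ n - 1) (hdt : d - 1 ≤ t) :
    ∃ X : LocalUFDWithCompletion (MvPowerSeries (Fin n) ℂ),
      alphaAt X ⊥ Ideal.bot_prime = (t : WithBot ℕ∞) ∧
      ∀ (p : Ideal X.A) (hp : p.IsPrime), idealHt p = 1 →
        alphaAt X p hp = ((d - 1 : ℕ) : WithBot ℕ∞) := by
  have hk : #ℂ ^ ℵ₀ = #ℂ := by rw [mk_complex, continuum_power_aleph0]
  exact exists_local_UFD_completion_powerSeries_general hk hdt (by omega) (by omega)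
end

section
/- Let (T, m) be a complete local equidimensional ring with dim T ≥ 2 such that no integer of T is a zerodivisor, and let R₀ be the localization of the prime subring of T at its contraction of m (so R₀ is ℚ, ℤ_p for a prime p, or ℤ_{(p)} for a prime p). Then for every integer t with 0 ≤ t ≤ dim T − 1, there exists a prime ideal P of T of height t such that P ∩ R₀ = (0). -/
open IsLocalRing

/-- The localization of the prime subring of a local ring `T` at the contraction of the
maximal ideal, realized as a subring of `T`: its elements are the fractions `a/b` with
`a`, `b` integers and `b` invertible in `T` (equivalently, `b` outside the contraction
of the maximal ideal). -/
def primeSubringLoc (T : Type*) [CommRing T] [IsLocalRing T] : Subring T where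
  carrier := {x : T | ∃ a b : ℤ, IsUnit ((b : ℤ) : T) ∧ x * ((b : ℤ) : T) = ((a : ℤ) : T)}
  one_mem' := ⟨1, 1, by simp⟩
  zero_mem' := ⟨0, 1, by simp⟩
  mul_mem' := by
    rintro x₁ x₂ ⟨a₁, b₁, hu₁, h₁⟩ ⟨a₂, b₂, hu₂, h₂⟩
    refine ⟨a₁ * a₂, b₁ * b₂, by push_cast; exact hu₁.mul hu₂, ?_⟩
    push_cast
    calc x₁ * x₂ * ((b₁ : T) * (b₂ : T)) = (x₁ * (b₁ : T)) * (x₂ * (b₂ : T)) := by ring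
    _ = ((a₁ : T)) * ((a₂ : T)) := by rw [h₁, h₂]
  add_mem' := by
    rintro x₁ x₂ ⟨a₁, b₁, hu₁, h₁⟩ ⟨a₂, b₂, hu₂, h₂⟩
    refine ⟨a₁ * b₂ + a₂ * b₁, b₁ * b₂, by push_cast; exact hu₁.mul hu₂, ?_⟩
    push_cast
    calc (x₁ + x₂) * ((b₁ : T) * (b₂ : T))
        = (x₁ * (b₁ : T)) * (b₂ : T) + (x₂ * (b₂ : T)) * (b₁ : T) := by ring
    _ = (a₁ : T) * (b₂ : T) + (a₂ : T) * (b₁ : T) := by rw [h₁, h₂]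
  neg_mem' := by
    rintro x ⟨a, b, hu, h⟩
    exact ⟨-a, b, hu, by push_cast; rw [neg_mul, h]⟩

/-!
If `p₀ < p₁ < p₂` are primes of a Noetherian ring and `y ∉ p₀`, then some prime strictly between
`p₀` and `p₂` avoids `y`: by prime avoidance choose `x ∈ p₂` outside the minimal primes of
`p₀ + (y)` and take a minimal prime of `p₀ + (x)` inside `p₂`. Pushing `y` out of a chain of primes
from the bottom up, one gets primes avoiding `y` of every height `t < dim T` as soon as `y` lies in
no minimal prime. If `m ∩ ℤ = (0)`, every prime `P` has `P ∩ ℤ = (0)`. Otherwise the primes of `ℤ`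
inside `m ∩ ℤ` are `(0)` and `m ∩ ℤ` itself, so it is enough that `P` avoids one nonzero integer
of `m`. In both cases `P ∩ R₀ = (0)` follows.
-/

section AvoidingPrimes

variable {R : Type*} [CommRing R]

lemma exists_le_mem_minimalPrimes {I : Ideal R} {p : PrimeSpectrum R} (hIp : I ≤ p.asIdeal) :
    ∃ q ≤ p, q.asIdeal ∈ I.minimalPrimes :=
  have ⟨q, hq, hqp⟩ := Ideal.exists_minimalPrimes_le hIp
  ⟨⟨q, hq.isPrime⟩, hqp, hq⟩

lemma exists_mem_forall_minimalPrimes_notMem [IsNoetherianRing R] {I J : Ideal R}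
    (hJ : ∀ q ∈ I.minimalPrimes, ¬ J ≤ q) : ∃ x ∈ J, ∀ q ∈ I.minimalPrimes, x ∉ q := by
  by_contra! hcover
  obtain ⟨q, hq, hJq⟩ := (Ideal.subset_union_prime_finite
    (Ideal.finite_minimalPrimes_of_isNoetherianRing R I) (f := id) ⊤ ⊤
    fun q hq _ _ ↦ hq.isPrime).1 fun x hx ↦ by simpa using hcover x hx
  exact hJ q hq hJq

variable [IsNoetherianRing R] {p₀ p₁ p₂ : PrimeSpectrum R}

-- This is Krull's principal ideal theorem in `R ⧸ p₀`.
lemma not_le_of_mem_minimalPrimes_sup_span_singleton {x : R} {q : PrimeSpectrum R}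
    (hq : q.asIdeal ∈ (p₀.asIdeal ⊔ Ideal.span {x}).minimalPrimes) (h₀₁ : p₀ < p₁)
    (h₁₂ : p₁ < p₂) : ¬ p₂ ≤ q := by
  intro h₂q
  have hxq : x ∈ q.asIdeal := hq.le (Ideal.mem_sup_right (Ideal.mem_span_singleton_self x))
  obtain ⟨r, hxr, h₀r, hrq⟩ :=
    PrimeSpectrum.exist_mem_one_of_mem_two h₀₁ (h₁₂.trans_le h₂q) hxq
  have hle : p₀.asIdeal ⊔ Ideal.span {x} ≤ r.asIdeal :=
    sup_le h₀r.le ((Ideal.span_singleton_le_iff_mem _).2 hxr)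
  exact hrq.not_ge (hq.2 ⟨r.isPrime, hle⟩ hrq.le)

lemma exists_lt_lt_notMem (h₀₁ : p₀ < p₁) (h₁₂ : p₁ < p₂) {y : R} (hy : y ∉ p₀.asIdeal) :
    ∃ q, p₀ < q ∧ q < p₂ ∧ y ∉ q.asIdeal := by
  by_cases hy₂ : y ∈ p₂.asIdeal
  swap
  · exact ⟨p₁, h₀₁, h₁₂, fun hy₁ ↦ hy₂ (h₁₂.le hy₁)⟩
  have hspan {z : R} {p : PrimeSpectrum R} (hp : p₀ ≤ p) (hz : z ∈ p.asIdeal) :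
      p₀.asIdeal ⊔ Ideal.span {z} ≤ p.asIdeal :=
    sup_le hp ((Ideal.span_singleton_le_iff_mem _).2 hz)
  have h₀₂ : p₀ ≤ p₂ := (h₀₁.trans h₁₂).le
  obtain ⟨x, hx₂, hx⟩ := exists_mem_forall_minimalPrimes_notMem fun q hq ↦
    not_le_of_mem_minimalPrimes_sup_span_singleton (q := ⟨q, hq.isPrime⟩) (x := y) hq h₀₁ h₁₂
  obtain ⟨q, hq₂, hq⟩ := exists_le_mem_minimalPrimes (hspan h₀₂ hx₂)
  have hxq : x ∈ q.asIdeal := hq.le (Ideal.mem_sup_right (Ideal.mem_span_singleton_self x))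
  have h₀q : p₀ ≤ q := le_sup_left.trans hq.le
  have hx₀ : x ∉ p₀.asIdeal := fun hx₀ ↦
    have ⟨r, _, hr⟩ := exists_le_mem_minimalPrimes (hspan h₀₂ hy₂)
    hx _ hr (hr.le (Ideal.mem_sup_left hx₀))
  refine ⟨q, h₀q.lt_of_ne (by rintro rfl; exact hx₀ hxq), hq₂.lt_of_not_ge ?_, fun hyq ↦ ?_⟩
  · exact not_le_of_mem_minimalPrimes_sup_span_singleton hq h₀₁ h₁₂
  · obtain ⟨r, hrq, hr⟩ := exists_le_mem_minimalPrimes (hspan h₀q hyq)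
    have hyr : y ∈ r.asIdeal := hr.le (Ideal.mem_sup_right (Ideal.mem_span_singleton_self y))
    have h₀r : p₀ ≤ r := le_sup_left.trans hr.le
    exact not_le_of_mem_minimalPrimes_sup_span_singleton hq
      (h₀r.lt_of_ne (by rintro rfl; exact hy hyr))
      (hrq.lt_of_ne (by rintro rfl; exact hx _ hr hxq)) le_rfl

-- Requiring height exactly `t + 1` for `q` is what bounds from above the height of the prime
-- inserted between `p` and `q` in the inductive step.
lemma exists_lt_height_eq_notMem_of_height_eq {y : R} (hy : ∀ p ∈ minimalPrimes R, y ∉ p) {t : ℕ}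
    {q : PrimeSpectrum R} (hq : Order.height q = t + 1) :
    ∃ p < q, Order.height p = t ∧ y ∉ p.asIdeal := by
  induction t generalizing q with
  | zero =>
    obtain ⟨-, ⟨p, hpq, hp⟩, -⟩ := Order.height_eq_coe_add_one_iff.1 hq
    exact ⟨p, hpq, hp, hy _ (PrimeSpectrum.isMin_iff.1 (Order.height_eq_zero.1 hp))⟩
  | succ t ih =>
    obtain ⟨-, ⟨q', hq'q, hq'⟩, hle⟩ := Order.height_eq_coe_add_one_iff.1 hq
    obtain ⟨p, hpq', hp, hyp⟩ := ih (by exact_mod_cast hq')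
    obtain ⟨r, hpr, hrq, hyr⟩ := exists_lt_lt_notMem hpq' hq'q hyp
    refine ⟨r, hrq, (hle r hrq).antisymm ?_, hyr⟩
    simpa [hp] using Order.height_add_one_le hpr

lemma exists_height_eq_notMem {y : R} (hy : ∀ p ∈ minimalPrimes R, y ∉ p) {t : ℕ}
    (ht : (t : WithBot ℕ∞) + 1 ≤ ringKrullDim R) :
    ∃ p : PrimeSpectrum R, Order.height p = t ∧ y ∉ p.asIdeal := by
  obtain ⟨c, hc⟩ := (Order.le_krullDim_iff (n := t + 1)).1 (by exact_mod_cast ht)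
  have hlast : ((t + 1 : ℕ) : ℕ∞) ≤ Order.height c.last := hc ▸ Order.length_le_height_last
  obtain ⟨q, hq⟩ : ∃ q : PrimeSpectrum R, Order.height q = t + 1 := by
    rcases hlast.eq_or_lt with heq | hlt
    · exact ⟨_, by exact_mod_cast heq.symm⟩
    · have hfin : Order.height c.last < ⊤ :=
        c.last.height_eq_orderHeight ▸ Ideal.height_lt_top_of_isPrime
      obtain ⟨q, -, hq⟩ := (Order.coe_lt_height_iff hfin).1 hlt
      exact ⟨q, by exact_mod_cast hq⟩
  obtain ⟨p, -, hp⟩ := exists_lt_height_eq_notMem_of_height_eq hy hq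
  exact ⟨p, hp⟩

end AvoidingPrimes

section Contraction

variable {A T : Type*} [CommRing A] [CommRing T] [Algebra A T]

lemma under_eq_bot_of_mem_minimalPrimes
    (hreg : ∀ a : A, a ≠ 0 → algebraMap A T a ∈ nonZeroDivisors T) {q : Ideal T}
    (hq : q ∈ minimalPrimes T) : q.under A = ⊥ := by
  rw [eq_bot_iff]
  intro a haq
  by_contra ha
  exact notMem_nonZeroDivisors_of_mem_mem_minimalPrimes (Ideal.mem_comap.1 haq) hq (hreg a ha)

variable [Ring.DimensionLEOne A] [IsLocalRing T]

lemma under_eq_under_maximalIdeal {P : Ideal T} [P.IsPrime] (hP : P.under A ≠ ⊥) :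
    P.under A = (maximalIdeal T).under A :=
  (Ring.DimensionLEOne.maximalOfPrime hP inferInstance).eq_of_le Ideal.IsPrime.ne_top'
    (Ideal.comap_mono (le_maximalIdeal Ideal.IsPrime.ne_top'))

variable (A T) in
lemma exists_height_eq_under_eq_bot [IsNoetherianRing T]
    (hmin : ∀ q ∈ minimalPrimes T, q.under A = ⊥) {t : ℕ}
    (ht : (t : WithBot ℕ∞) + 1 ≤ ringKrullDim T) :
    ∃ p : PrimeSpectrum T, Order.height p = t ∧ p.asIdeal.under A = ⊥ := by
  by_cases hm : (maximalIdeal T).under A = ⊥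
  · obtain ⟨p, hp, -⟩ := exists_height_eq_notMem (y := 1)
      (fun q hq ↦ q.ne_top_iff_one.1 hq.isPrime.ne_top) ht
    exact ⟨p, hp, eq_bot_mono (Ideal.comap_mono (le_maximalIdeal p.isPrime.ne_top)) hm⟩
  · obtain ⟨a, ham, ha⟩ := Submodule.exists_mem_ne_zero_of_ne_bot hm
    have ha_min (q) (hq : q ∈ minimalPrimes T) : algebraMap A T a ∉ q := fun haq ↦
      ha ((Submodule.eq_bot_iff _).1 (hmin q hq) a haq)
    obtain ⟨p, hp, hap⟩ := exists_height_eq_notMem ha_min ht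
    refine ⟨p, hp, ?_⟩
    by_contra hbot
    exact hap ((under_eq_under_maximalIdeal hbot).ge ham)

end Contraction

lemma idealHt_asIdeal {R : Type*} [CommRing R] (p : PrimeSpectrum R) :
    idealHt p.asIdeal = Order.height p :=
  le_antisymm (iInf₂_le p le_rfl) (le_iInf₂ fun _ hq ↦ Order.height_mono hq)

lemma comap_subtype_primeSubringLoc_eq_bot {T : Type*} [CommRing T] [IsLocalRing T]
    {I : Ideal T} (hI : I.under ℤ = ⊥) : I.comap (primeSubringLoc T).subtype = ⊥ := by
  rw [eq_bot_iff]
  rintro ⟨x, a, b, hb, hab⟩ (hx : x ∈ I)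
  have ha : a ∈ I.under ℤ := by
    simpa [← hab] using I.mul_mem_right (b : T) hx
  rw [hI, Ideal.mem_bot] at ha
  exact Subtype.ext (hb.mul_left_eq_zero.1 (by rw [hab, ha, Int.cast_zero]))

theorem exists_prime_of_height_disjoint_primeSubringLoc_general {T : Type*} [CommRing T]
    [IsLocalRing T] [IsNoetherianRing T] (hmin : ∀ q ∈ minimalPrimes T, q.under ℤ = ⊥)
    (t : ℕ) (ht : (t : WithBot ℕ∞) + 1 ≤ ringKrullDim T) :
    ∃ P : Ideal T, P.IsPrime ∧ idealHt P = (t : ℕ∞) ∧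
      Ideal.comap (primeSubringLoc T).subtype P = ⊥ := by
  obtain ⟨p, hp, hbot⟩ := exists_height_eq_under_eq_bot ℤ T hmin ht
  exact ⟨p.asIdeal, p.isPrime, (idealHt_asIdeal p).trans hp,
    comap_subtype_primeSubringLoc_eq_bot hbot⟩

/-- Let `(T, m)` be a complete local equidimensional ring with `dim T ≥ 2` such that no
integer of `T` is a zerodivisor, and let `R₀` be the localization of the prime subring
of `T` at its contraction of `m`. Then for every integer `t` with `0 ≤ t ≤ dim T − 1`
there is a prime ideal `P` of `T` of height `t` with `P ∩ R₀ = (0)`. -/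
theorem exists_prime_of_height_disjoint_primeSubringLoc {T : Type*} [CommRing T]
    [IsLocalRing T] [IsNoetherianRing T] [IsAdicComplete (maximalIdeal T) T]
    (hequi : IsEquidim T) (hdim : 2 ≤ ringKrullDim T)
    (hint : ∀ n : ℤ, n ≠ 0 → ((n : ℤ) : T) ∈ nonZeroDivisors T)
    (t : ℕ) (ht : (t : WithBot ℕ∞) + 1 ≤ ringKrullDim T) :
    ∃ P : Ideal T, P.IsPrime ∧ idealHt P = (t : ℕ∞) ∧
      Ideal.comap (primeSubringLoc T).subtype P = ⊥ := by
  exact exists_prime_of_height_disjoint_primeSubringLoc_general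
    (fun _ hq ↦ under_eq_bot_of_mem_minimalPrimes hint hq) t ht
end
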